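/- arXiv:2312.14721 — 9 statements merged into one kernel-verified Lean document; each statement's English description precedes it below -/
import Mathlib

section
/- Let G be a finite simple graph with vertex set V, |V| = n ≥ 1, and edge set E, and let w be a positive integer. Then G has an independent set of size w if and only if the vertex set of the auxiliary graph H admits a partition into n districts (nonempty parts each inducing a connected subgraph of H) such that at least w of the districts are won by blue. -/
/-!
Given an independent set `S`, every edge `e` has an endpoint outside `S`; sending all red vertices
of `e` to that endpoint splits `H` into `n` stars, one around each blue vertex, and the star around
a vertex of `S` is a single blue vertex, hence won by blue.

Conversely, choose a blue vertex in each district won by blue. If the vertices `u`, `v` chosen in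
two different districts `D₁`, `D₂` were joined by an edge `e`, then each of the `2n` red vertices of
`e` would lie in `D₁`, in `D₂`, or form a district on its own (`exists_blue_mem`). The first two
cases account for fewer red vertices than `D₁` and `D₂` have blue ones, so for fewer than `n`, and
the third for at most `n`, the number of districts. That is less than `2n` in total
(`not_adj_of_won`).
-/

/-- A partition of the vertex set of `G` into `k` districts: `k` nonempty,
pairwise disjoint parts covering all vertices, each inducing a connected subgraph. -/
def IsKPartition {α : Type*} (G : SimpleGraph α) (k : ℕ) (P : Set (Set α)) : Prop :=
  P.ncard = k ∧
  (∀ D ∈ P, D.Nonempty) ∧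
  (∀ D ∈ P, (G.induce D).Connected) ∧
  P.PairwiseDisjoint id ∧
  ⋃₀ P = Set.univ

/-- District `D` is won by the candidate `blue`: for every other candidate `j`, the
number of vertices of `D` of color `blue` strictly exceeds that of color `j`. -/
def WonBy {α C : Type*} (color : α → C) (blue : C) (D : Set α) : Prop :=
  ∀ j : C, j ≠ blue → {x ∈ D | color x = j}.ncard < {x ∈ D | color x = blue}.ncard

/-- Vertices of the auxiliary graph `H`: a blue vertex `b^v` for each vertex `v` of `G`,
and `2n` red vertices `r^e_i` for each edge `e` of `G`. -/
inductive AuxV (V E : Type*) (n : ℕ) where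
  | blue : V → AuxV V E n
  | red : E → Fin (2 * n) → AuxV V E n

/-- The auxiliary graph `H`: each red vertex `r^e_i` is adjacent exactly to the blue
vertices `b^u`, `b^v` where `e = {u, v}`. -/
def auxGraph {V : Type*} (G : SimpleGraph V) (n : ℕ) :
    SimpleGraph (AuxV V ↥G.edgeSet n) :=
  SimpleGraph.fromRel (fun x y =>
    ∃ (v : V) (e : ↥G.edgeSet) (i : Fin (2 * n)),
      v ∈ (e : Sym2 V) ∧ x = AuxV.blue v ∧ y = AuxV.red e i)

/-- The coloring of `H`: vertices `b^v` are blue (`true`), vertices `r^e_i` are red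
(`false`). -/
def auxIsBlue {V E : Type*} {n : ℕ} : AuxV V E n → Bool
  | AuxV.blue _ => true
  | AuxV.red _ _ => false

instance auxV_finite {V E : Type*} [Finite V] [Finite E] {n : ℕ} : Finite (AuxV V E n) := by
  refine Finite.of_surjective
    (fun x : V ⊕ (E × Fin (2 * n)) => (Sum.elim AuxV.blue (fun p => AuxV.red p.1 p.2) x)) ?_
  rintro (v | ⟨e, i⟩)
  · exact ⟨Sum.inl v, rfl⟩
  · exact ⟨Sum.inr (e, i), rfl⟩

lemma auxGraph_adj_blue_red {V : Type*} {G : SimpleGraph V} {n : ℕ} {v : V} {e : ↥G.edgeSet}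
    {i : Fin (2 * n)} (h : v ∈ (e : Sym2 V)) :
    (auxGraph G n).Adj (AuxV.blue v) (AuxV.red e i) := by
  rw [auxGraph, SimpleGraph.fromRel_adj]
  exact ⟨by simp, Or.inl ⟨v, e, i, h, rfl, rfl⟩⟩

lemma exists_of_auxGraph_adj_red {V : Type*} {G : SimpleGraph V} {n : ℕ} {e : ↥G.edgeSet}
    {i : Fin (2 * n)} {x : AuxV V ↥G.edgeSet n} (h : (auxGraph G n).Adj (AuxV.red e i) x) :
    ∃ v ∈ (e : Sym2 V), x = AuxV.blue v := by
  rw [auxGraph, SimpleGraph.fromRel_adj] at h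
  obtain ⟨-, ⟨v, f, j, hv, h1, h2⟩ | ⟨v, f, j, hv, h1, h2⟩⟩ := h
  · cases h1
  · cases h2
    exact ⟨v, hv, h1⟩

/-- All neighbours of a red vertex are blue endpoints of its edge, so a district containing a red
vertex and anything else contains such an endpoint. -/
lemma exists_blue_mem {V : Type*} {G : SimpleGraph V} {n : ℕ} {e : ↥G.edgeSet}
    {i : Fin (2 * n)} {D : Set (AuxV V ↥G.edgeSet n)} (hc : ((auxGraph G n).induce D).Connected)
    (hr : AuxV.red e i ∈ D) (hD : D ≠ {AuxV.red e i}) :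
    ∃ v ∈ (e : Sym2 V), AuxV.blue v ∈ D := by
  obtain ⟨y, hy, hne⟩ : ∃ y ∈ D, y ≠ AuxV.red e i := by
    by_contra! h
    exact hD (Set.eq_singleton_iff_unique_mem.2 ⟨hr, h⟩)
  obtain ⟨p⟩ := hc.preconnected ⟨_, hr⟩ ⟨y, hy⟩
  cases p with
  | nil => exact absurd rfl hne
  | @cons _ z _ h _ =>
    obtain ⟨v, hv, hz⟩ := exists_of_auxGraph_adj_red (SimpleGraph.induce_adj.1 h)
    exact ⟨v, hv, hz ▸ z.2⟩

lemma not_adj_of_won {V : Type*} [Fintype V] {G : SimpleGraph V} {n : ℕ}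
    (hn : Fintype.card V = n) {P : Set (Set (AuxV V ↥G.edgeSet n))}
    (hP : IsKPartition (auxGraph G n) n P) {D₁ D₂ : Set (AuxV V ↥G.edgeSet n)}
    (h₁ : D₁ ∈ P) (h₂ : D₂ ∈ P) (hne : D₁ ≠ D₂)
    (w₁ : WonBy auxIsBlue true D₁) (w₂ : WonBy auxIsBlue true D₂) {u v : V}
    (hu : AuxV.blue u ∈ D₁) (hv : AuxV.blue v ∈ D₂) : ¬ G.Adj u v := by
  intro huv
  obtain ⟨hcard, -, hconn, hdisj, hcov⟩ := hP
  let e : ↥G.edgeSet := ⟨s(u, v), huv⟩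
  have eq_of_mem : ∀ {D D' x}, D ∈ P → D' ∈ P → x ∈ D → x ∈ D' → D = D' := by
    intro D D' x hD hD' hx hx'
    by_contra hDD
    exact Set.disjoint_left.1 (hdisj hD hD' hDD) hx hx'
  have red_inj : Function.Injective (fun i => (AuxV.red e i : AuxV V ↥G.edgeSet n)) := by
    intro i j h
    cases h
    rfl
  have hred : ∀ D : Set (AuxV V ↥G.edgeSet n), {i : Fin (2 * n) | AuxV.red e i ∈ D}.ncard
      ≤ {x ∈ D | auxIsBlue x = false}.ncard := by
    intro D
    refine Set.ncard_le_ncard_of_injOn (fun i => AuxV.red e i) ?_ red_inj.injOn (Set.toFinite _)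
    intro i hi
    exact ⟨hi, rfl⟩
  have hA := (hred D₁).trans_lt (w₁ false (by simp))
  have hB := (hred D₂).trans_lt (w₂ false (by simp))
  have hC : {i : Fin (2 * n) | {AuxV.red e i} ∈ P}.ncard ≤ n := by
    refine le_of_le_of_eq ?_ hcard
    refine Set.ncard_le_ncard_of_injOn (fun i => {AuxV.red e i}) (fun i hi => hi) ?_
      (Set.toFinite _)
    intro i _ j _ h
    exact red_inj (Set.singleton_injective h)
  have hblue : {x ∈ D₁ | auxIsBlue x = true}.ncard + {x ∈ D₂ | auxIsBlue x = true}.ncard ≤ n := by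
    rw [← Set.ncard_union_eq]
    · have hsub : {x ∈ D₁ | auxIsBlue x = true} ∪ {x ∈ D₂ | auxIsBlue x = true}
          ⊆ Set.range (AuxV.blue : V → AuxV V ↥G.edgeSet n) := by
        rintro (a | ⟨f, i⟩) h
        · exact ⟨a, rfl⟩
        · simp [auxIsBlue] at h
      refine (Set.ncard_le_ncard hsub (Set.toFinite _)).trans ?_
      rw [← Set.image_univ]
      refine (Set.ncard_image_le (Set.toFinite _)).trans ?_
      rw [Set.ncard_univ, Nat.card_eq_fintype_card, hn]
    · rw [Set.disjoint_left]
      intro x hx hx'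
      exact hne (eq_of_mem h₁ h₂ hx.1 hx'.1)
  have hall : (Set.univ : Set (Fin (2 * n))) ⊆ {i | AuxV.red e i ∈ D₁} ∪ {i | AuxV.red e i ∈ D₂}
      ∪ {i | {AuxV.red e i} ∈ P} := by
    intro i _
    obtain ⟨D, hD, hi⟩ : (AuxV.red e i : AuxV V ↥G.edgeSet n) ∈ ⋃₀ P := hcov ▸ Set.mem_univ _
    by_cases hs : D = {AuxV.red e i}
    · subst hs
      exact Or.inr hD
    · obtain ⟨a, ha, haD⟩ := exists_blue_mem (hconn D hD) hi hs
      rcases Sym2.mem_iff.1 ha with rfl | rfl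
      · exact Or.inl (Or.inl (eq_of_mem hD h₁ haD hu ▸ hi))
      · exact Or.inl (Or.inr (eq_of_mem hD h₂ haD hv ▸ hi))
  have hle := Set.ncard_le_ncard hall (Set.toFinite _)
  rw [Set.ncard_univ, Nat.card_eq_fintype_card, Fintype.card_fin] at hle
  have hle₁ := Set.ncard_union_le ({i | AuxV.red e i ∈ D₁} ∪ {i | AuxV.red e i ∈ D₂})
    {i : Fin (2 * n) | {AuxV.red e i} ∈ P}
  have hle₂ := Set.ncard_union_le {i : Fin (2 * n) | AuxV.red e i ∈ D₁} {i | AuxV.red e i ∈ D₂}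
  omega

/-- The blue vertex `b^v` together with all red vertices of the edges that `f` assigns to `v`. -/
def auxStar {V E : Type*} (n : ℕ) (f : E → V) (v : V) : Set (AuxV V E n) :=
  {x | match x with
    | AuxV.blue a => a = v
    | AuxV.red e _ => f e = v}

lemma auxStar_injective {V E : Type*} (n : ℕ) (f : E → V) : Function.Injective (auxStar n f) := by
  intro a b h
  have : (AuxV.blue a : AuxV V E n) ∈ auxStar n f b := h ▸ (rfl : a = a)
  exact this

lemma isKPartition_range_auxStar {V : Type*} [Fintype V] {G : SimpleGraph V} {n : ℕ}
    (hn : Fintype.card V = n) {f : ↥G.edgeSet → V} (hf : ∀ e : ↥G.edgeSet, f e ∈ (e : Sym2 V)) :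
    IsKPartition (auxGraph G n) n (Set.range (auxStar n f)) := by
  refine ⟨?_, ?_, ?_, ?_, ?_⟩
  · rw [← Set.image_univ, Set.ncard_image_of_injective _ (auxStar_injective n f), Set.ncard_univ,
      Nat.card_eq_fintype_card, hn]
  · rintro _ ⟨v, rfl⟩
    exact ⟨AuxV.blue v, (rfl : v = v)⟩
  · rintro _ ⟨v, rfl⟩
    rw [SimpleGraph.connected_iff_exists_forall_reachable]
    refine ⟨⟨AuxV.blue v, (rfl : v = v)⟩, ?_⟩
    rintro ⟨a | ⟨e, i⟩, hx⟩
    · obtain rfl : a = v := hx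
      exact SimpleGraph.Reachable.refl _
    · obtain rfl : f e = v := hx
      exact SimpleGraph.Adj.reachable (SimpleGraph.induce_adj.2 (auxGraph_adj_blue_red (hf e)))
  · rintro _ ⟨a, rfl⟩ _ ⟨b, rfl⟩ hab
    refine Set.disjoint_left.2 ?_
    rintro (c | ⟨e, i⟩) h1 h2
    · exact hab (congrArg _ ((h1 : c = a).symm.trans h2))
    · exact hab (congrArg _ ((h1 : f e = a).symm.trans h2))
  · refine Set.eq_univ_of_forall ?_
    rintro (c | ⟨e, i⟩)
    · exact ⟨_, ⟨c, rfl⟩, (rfl : c = c)⟩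
    · exact ⟨_, ⟨f e, rfl⟩, (rfl : f e = f e)⟩

lemma wonBy_auxStar {V E : Type*} [Finite V] [Finite E] {n : ℕ} {f : E → V} {v : V}
    (hv : ∀ e, f e ≠ v) : WonBy auxIsBlue true (auxStar n f v) := by
  intro j hj
  obtain rfl : j = false := by simpa using hj
  have h0 : {x ∈ auxStar n f v | auxIsBlue x = false} = ∅ := by
    rw [Set.eq_empty_iff_forall_notMem]
    rintro (a | ⟨e, i⟩) ⟨h1, h2⟩
    · cases h2
    · exact hv e h1
  rw [h0, Set.ncard_empty, Set.ncard_pos (Set.toFinite _)]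
  exact ⟨AuxV.blue v, (rfl : v = v), rfl⟩

/-- Lemma 3.1: `G` has an independent set of size `w` iff the auxiliary
graph `H` admits a partition into `n` districts of which at least `w` are won by blue. -/
theorem stmt0 {V : Type*} [Fintype V] (G : SimpleGraph V)
    (n : ℕ) (hn : Fintype.card V = n) (hn1 : 1 ≤ n)
    (w : ℕ) (hw : 0 < w) :
    (∃ S : Set V, S.ncard = w ∧ S.Pairwise (fun a b => ¬ G.Adj a b)) ↔
    (∃ P : Set (Set (AuxV V ↥G.edgeSet n)),
      IsKPartition (auxGraph G n) n P ∧
      w ≤ {D ∈ P | WonBy auxIsBlue true D}.ncard) := by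
  constructor
  · rintro ⟨S, hS, hind⟩
    have hex : ∀ e : ↥G.edgeSet, ∃ v ∈ (e : Sym2 V), v ∉ S := by
      rintro ⟨e, he⟩
      induction e with
      | _ a b =>
        by_cases ha : a ∈ S
        · exact ⟨b, by simp, fun hb => hind ha hb (G.ne_of_adj he) he⟩
        · exact ⟨a, by simp, ha⟩
    choose f hf hfS using hex
    refine ⟨Set.range (auxStar n f), isKPartition_range_auxStar hn hf, ?_⟩
    rw [← hS]
    refine Set.ncard_le_ncard_of_injOn (auxStar n f) ?_ (auxStar_injective n f).injOn
      (Set.toFinite _)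
    intro v hv
    exact ⟨⟨v, rfl⟩, wonBy_auxStar fun e h => hfS e (h ▸ hv)⟩
  · rintro ⟨P, hP, hle⟩
    have hex : ∀ D : {D ∈ P | WonBy auxIsBlue true D}, ∃ v, AuxV.blue v ∈ D.1 := by
      rintro ⟨D, hD, hwon⟩
      have hpos := (Nat.zero_le _).trans_lt (hwon false (by simp))
      rw [Set.ncard_pos (Set.toFinite _)] at hpos
      obtain ⟨a | ⟨e, i⟩, h1, h2⟩ := hpos
      · exact ⟨a, h1⟩
      · cases h2
    choose g hg using hex
    have hginj : Function.Injective g := by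
      intro D D' h
      by_contra hDD
      refine Set.disjoint_left.1 (hP.2.2.2.1 D.2.1 D'.2.1 fun h => hDD (Subtype.ext h)) (hg D) ?_
      exact h ▸ hg D'
    have hcard : w ≤ (Set.range g).ncard := by
      rwa [← Set.image_univ, Set.ncard_image_of_injective _ hginj, Set.ncard_univ,
        Nat.card_coe_set_eq]
    obtain ⟨S, hSsub, hS⟩ := Set.exists_subset_card_eq hcard
    refine ⟨S, hS, ?_⟩
    intro a ha b hb hab
    obtain ⟨D, rfl⟩ := hSsub ha
    obtain ⟨D', rfl⟩ := hSsub hb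
    refine not_adj_of_won hn hP D.2.1 D'.2.1 ?_ D.2.2 D'.2.2 (hg D) (hg D')
    intro h
    exact hab (congrArg g (Subtype.ext h))
end

section
/- Let G be a finite connected simple graph with vertex set V, |V| = n ≥ 2, and edge set E, |E| = m, and let l be an integer with l ≥ 2. Then G has a connected vertex cover of size at most l if and only if the vertex set of the auxiliary graph H admits a partition into n districts (nonempty parts each inducing a connected subgraph of H) such that at least one district is won by blue. -/
/-- Vertices of the auxiliary graph `H` for the connected-vertex-cover reduction:
a white vertex `w^v` and `n·m·(m+1)` red vertices `r^v_i` for each vertex `v` of `G`;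
a blue vertex `b^e`, `n·l·(m+1)` blue vertices `b'^e_i`, and `m` vertices `c^e_{i,j}`
of color `C^e` for each `b'^e_i`, for each edge `e` of `G`. -/
inductive CVert (V E : Type*) (n m l : ℕ) where
  | w : V → CVert V E n m l
  | r : V → Fin (n * m * (m + 1)) → CVert V E n m l
  | b : E → CVert V E n m l
  | b' : E → Fin (n * l * (m + 1)) → CVert V E n m l
  | c : E → Fin (n * l * (m + 1)) → Fin m → CVert V E n m l

/-- The colors used in the auxiliary graph `H`: blue, red, white, and one extra
color `C^e` for each edge `e` of `G`. -/
inductive CColor (E : Type*) where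
  | blue : CColor E
  | red : CColor E
  | white : CColor E
  | ce : E → CColor E

/-- The coloring of the auxiliary graph `H`. -/
def cColor {V E : Type*} {n m l : ℕ} : CVert V E n m l → CColor E
  | CVert.w _ => CColor.white
  | CVert.r _ _ => CColor.red
  | CVert.b _ => CColor.blue
  | CVert.b' _ _ => CColor.blue
  | CVert.c e _ _ => CColor.ce e

/-- The auxiliary graph `H`: each `r^v_i` is adjacent exactly to `w^v`; each `b^e` with
`e = {u,v}` is adjacent to `w^u` and `w^v`; each `b'^e_i` is adjacent exactly to `b^e`
(and to its own `c`-vertices); each `c^e_{i,j}` is adjacent exactly to `b'^e_i`. -/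
def cGraph {V : Type*} (G : SimpleGraph V) (n m l : ℕ) :
    SimpleGraph (CVert V ↥G.edgeSet n m l) :=
  SimpleGraph.fromRel (fun x y =>
    (∃ (v : V) (i : Fin (n * m * (m + 1))), x = CVert.w v ∧ y = CVert.r v i) ∨
    (∃ (v : V) (e : ↥G.edgeSet), v ∈ (e : Sym2 V) ∧ x = CVert.w v ∧ y = CVert.b e) ∨
    (∃ (e : ↥G.edgeSet) (i : Fin (n * l * (m + 1))), x = CVert.b e ∧ y = CVert.b' e i) ∨
    (∃ (e : ↥G.edgeSet) (i : Fin (n * l * (m + 1))) (j : Fin m),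
      x = CVert.b' e i ∧ y = CVert.c e i j))

/-! ### Connectedness and counting in general graphs -/

section General

variable {α : Type*} {H : SimpleGraph α}

lemma subset_of_closed {D A : Set α} (h : (H.induce D).Connected) {x : α} (hx : x ∈ D)
    (hxA : x ∈ A) (hcl : ∀ a ∈ D, ∀ b ∈ D, a ∈ A → H.Adj a b → b ∈ A) : D ⊆ A := by
  intro y hy
  obtain ⟨p⟩ := h.preconnected ⟨x, hx⟩ ⟨y, hy⟩
  have key : ∀ (a b : D), (H.induce D).Walk a b → (a : α) ∈ A → (b : α) ∈ A := by
    intro a b p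
    induction p with
    | nil => exact id
    | cons hadj _ ih => exact fun ha => ih (hcl _ (Subtype.prop _) _ (Subtype.prop _) ha hadj)
  exact key _ _ p hxA

lemma connected_of_closed {D : Set α} {x : α} (hx : x ∈ D)
    (h : ∀ A : Set α, x ∈ A → (∀ a ∈ D, ∀ b ∈ D, a ∈ A → H.Adj a b → b ∈ A) → D ⊆ A) :
    (H.induce D).Connected := by
  have key : ∀ y : D, (H.induce D).Reachable ⟨x, hx⟩ y := by
    have := h {y | ∃ hy : y ∈ D, (H.induce D).Reachable ⟨x, hx⟩ ⟨y, hy⟩}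
      ⟨hx, SimpleGraph.Reachable.refl _⟩ (by
        rintro a ha b hb ⟨_, hr⟩ hab
        refine ⟨hb, hr.trans (SimpleGraph.Adj.reachable ?_)⟩
        exact hab)
    intro y
    exact (this y.2).2
  have : Nonempty D := ⟨⟨x, hx⟩⟩
  exact ⟨fun a b => (key a).symm.trans (key b)⟩

lemma ncard_le_card {ι : Type*} [Finite ι] (f : ι → α) {s : Set α} (h : s ⊆ Set.range f) :
    s.ncard ≤ Nat.card ι := by
  refine (Set.ncard_le_ncard h (Set.finite_range f)).trans ?_
  rw [← Set.image_univ, ← Set.ncard_univ]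
  exact Set.ncard_image_le Set.finite_univ

lemma card_le_ncard [Finite α] {ι : Type*} (f : ι → α) (hf : Function.Injective f) {s : Set α}
    (h : ∀ i, f i ∈ s) : Nat.card ι ≤ s.ncard := by
  rw [← Set.ncard_range_of_injective hf]
  exact Set.ncard_le_ncard (Set.range_subset_iff.2 h) (Set.toFinite _)

/-- If each point `x i` is outside `W` and its district is confined to a region `A i` containing
no other point `x j`, then the points lie in distinct districts other than `W`, hence there are at
most `k - 1` of them. -/
lemma card_add_one_le [Finite α] {k : ℕ} {P : Set (Set α)} (hP : IsKPartition H k P)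
    {W : Set α} (hW : W ∈ P) {ι : Type*} (x : ι → α) (A : ι → Set α)
    (hA : ∀ i j, x i ∈ A j → i = j) (hx : ∀ i, x i ∉ W)
    (hD : ∀ i, ∀ D ∈ P, x i ∈ D → D ⊆ A i) : Nat.card ι + 1 ≤ k := by
  obtain ⟨hk, -, -, -, hU⟩ := hP
  have hex : ∀ i, ∃ D ∈ P, x i ∈ D := fun i => by
    have : x i ∈ ⋃₀ P := hU ▸ Set.mem_univ _
    exact this
  choose D hDP hxD using hex
  have hinj : Function.Injective D := fun i j hij =>
    hA i j (hD j (D j) (hDP j) (hxD j) (hij.subset (hxD i)))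
  have h1 : Nat.card ι ≤ (P \ {W}).ncard := by
    refine card_le_ncard D hinj fun i => ⟨hDP i, fun h => hx i ?_⟩
    rw [Set.mem_singleton_iff] at h
    exact h ▸ hxD i
  have h2 := Set.ncard_sdiff_singleton_add_one hW (Set.toFinite P)
  omega

/-- The fibers of a surjection form a partition with one district per value. -/
lemma isKPartition_fibers {V : Type*} (f : α → V) (hf : Function.Surjective f)
    (hc : ∀ v, (H.induce (f ⁻¹' {v})).Connected) :
    IsKPartition H (Nat.card V) (Set.range fun v => f ⁻¹' {v}) := by
  refine ⟨Set.ncard_range_of_injective ?_, ?_, ?_, ?_, ?_⟩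
  · intro u v huv
    obtain ⟨x, hx⟩ := hf u
    have : x ∈ f ⁻¹' {v} := by
      have h : x ∈ f ⁻¹' {u} := hx
      exact (show f ⁻¹' {u} = f ⁻¹' {v} from huv) ▸ h
    exact hx.symm.trans this
  · rintro _ ⟨v, rfl⟩
    exact hf v
  · rintro _ ⟨v, rfl⟩
    exact hc v
  · rintro _ ⟨u, rfl⟩ _ ⟨v, rfl⟩ huv
    refine Set.disjoint_left.2 fun x hx hx' => huv ?_
    have hu : f x = u := hx
    have hv : f x = v := hx'
    simp [← hu, ← hv]
  · exact Set.eq_univ_of_forall fun x => ⟨_, ⟨f x, rfl⟩, rfl⟩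

end General

/-! ### The auxiliary graph -/

instance CVert.instFinite {V E : Type*} [Finite V] [Finite E] (n m l : ℕ) :
    Finite (CVert V E n m l) := by
  let f : (V ⊕ (V × Fin (n * m * (m + 1))) ⊕ E ⊕ (E × Fin (n * l * (m + 1))) ⊕
      (E × Fin (n * l * (m + 1)) × Fin m)) → CVert V E n m l
    | .inl v => .w v
    | .inr (.inl (v, i)) => .r v i
    | .inr (.inr (.inl e)) => .b e
    | .inr (.inr (.inr (.inl (e, i)))) => .b' e i
    | .inr (.inr (.inr (.inr (e, i, j)))) => .c e i j
  refine Finite.of_surjective f ?_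
  rintro (v | ⟨v, i⟩ | e | ⟨e, i⟩ | ⟨e, i, j⟩)
  exacts [⟨.inl v, rfl⟩, ⟨.inr (.inl (v, i)), rfl⟩, ⟨.inr (.inr (.inl e)), rfl⟩,
    ⟨.inr (.inr (.inr (.inl (e, i)))), rfl⟩, ⟨.inr (.inr (.inr (.inr (e, i, j)))), rfl⟩]

section Aux

variable {V : Type*} {G : SimpleGraph V} {n m l : ℕ}

lemma adj_w_r (v : V) (i) : (cGraph G n m l).Adj (.w v) (.r v i) := by
  simp [cGraph]

lemma adj_w_b {v : V} {e : G.edgeSet} (h : v ∈ (e : Sym2 V)) :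
    (cGraph G n m l).Adj (.w v) (.b e) := by
  simp [cGraph, h]

lemma adj_b_b' (e : G.edgeSet) (i) : (cGraph G n m l).Adj (.b e) (.b' e i) := by
  simp [cGraph]

lemma adj_b'_c (e : G.edgeSet) (i j) : (cGraph G n m l).Adj (.b' e i) (.c e i j) := by
  simp [cGraph]

/-- To check a statement on all adjacent pairs of the auxiliary graph, it suffices to check it on
the four kinds of edges, in both directions. -/
lemma adj_elim {p : CVert V G.edgeSet n m l → CVert V G.edgeSet n m l → Prop}
    (h1 : ∀ v i, p (.w v) (.r v i) ∧ p (.r v i) (.w v))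
    (h2 : ∀ v (e : G.edgeSet), v ∈ (e : Sym2 V) → p (.w v) (.b e) ∧ p (.b e) (.w v))
    (h3 : ∀ e i, p (.b e) (.b' e i) ∧ p (.b' e i) (.b e))
    (h4 : ∀ e i j, p (.b' e i) (.c e i j) ∧ p (.c e i j) (.b' e i))
    {x y} (h : (cGraph G n m l).Adj x y) : p x y := by
  rw [cGraph, SimpleGraph.fromRel_adj] at h
  obtain ⟨-, (⟨v, i, rfl, rfl⟩ | ⟨v, e, hv, rfl, rfl⟩ | ⟨e, i, rfl, rfl⟩ | ⟨e, i, j, rfl, rfl⟩) |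
    (⟨v, i, rfl, rfl⟩ | ⟨v, e, hv, rfl, rfl⟩ | ⟨e, i, rfl, rfl⟩ | ⟨e, i, j, rfl, rfl⟩)⟩ := h
  exacts [(h1 v i).1, (h2 v e hv).1, (h3 e i).1, (h4 e i j).1,
    (h1 v i).2, (h2 v e hv).2, (h3 e i).2, (h4 e i j).2]

/-! ### From a connected vertex cover to a winning partition -/

open Classical in
/-- The vertex of `G` labelling the district of a vertex of `H`: the district of `v₀` is the one
won by blue, that of another `u ∈ S` is the single leaf `r^u_0`, and that of `u ∉ S` is the star
of `w^u`. -/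
noncomputable def districtOf (S : Set V) (v₀ : V) : CVert V G.edgeSet n m l → V
  | .w v => if v ∈ S then v₀ else v
  | .r v i => if v ∈ S ∧ (i : ℕ) ≠ 0 then v₀ else v
  | _ => v₀

lemma districtOf_surjective (S : Set V) (v₀ : V) (hR : 0 < n * m * (m + 1)) :
    Function.Surjective (districtOf (G := G) (n := n) (m := m) (l := l) S v₀) := fun v =>
  ⟨.r v ⟨0, hR⟩, by simp [districtOf]⟩

lemma districtOf_connected {S : Set V} (hS : (G.induce S).Connected)
    (hcov : ∀ ⦃u v : V⦄, G.Adj u v → u ∈ S ∨ v ∈ S) {v₀ : V} (hv₀ : v₀ ∈ S)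
    (hR : 0 < n * m * (m + 1)) (v : V) :
    ((cGraph G n m l).induce (districtOf S v₀ ⁻¹' {v})).Connected := by
  classical
  by_cases hv : v = v₀
  · subst hv
    refine connected_of_closed (x := .w v) (by simp [districtOf]) fun A hA hcl => ?_
    have hb : ∀ u ∈ S, (CVert.w u : CVert V G.edgeSet n m l) ∈ A → ∀ e : G.edgeSet,
        u ∈ (e : Sym2 V) → .b e ∈ A := fun u hu huA e he =>
      hcl (.w u) (by simp [districtOf, hu]) (.b e) (by simp [districtOf]) huA (adj_w_b he)
    have hw : S ⊆ {u | (CVert.w u : CVert V G.edgeSet n m l) ∈ A} := by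
      refine subset_of_closed hS hv₀ hA fun a ha b hbS haA hab => ?_
      have := hb a ha haA ⟨s(a, b), hab⟩ (by simp)
      exact hcl _ (by simp [districtOf]) _ (by simp [districtOf, hbS]) this
        (adj_w_b (by simp)).symm
    have hb_all : ∀ e : G.edgeSet, (CVert.b e : CVert V G.edgeSet n m l) ∈ A := by
      rintro ⟨e, he⟩
      induction e using Sym2.ind with
      | _ a b =>
        rcases hcov he with h | h
        · exact hb a h (hw h) _ (by simp)
        · exact hb b h (hw h) _ (by simp)
    have hb'_all : ∀ (e : G.edgeSet) i, (CVert.b' e i : CVert V G.edgeSet n m l) ∈ A :=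
      fun e i => hcl _ (by simp [districtOf]) _ (by simp [districtOf]) (hb_all e) (adj_b_b' e i)
    rintro (u | ⟨u, i⟩ | e | ⟨e, i⟩ | ⟨e, i, j⟩) hx
    · by_cases hu : u ∈ S
      · exact hw hu
      · have : u = v := by simpa [districtOf, hu] using hx
        exact this ▸ hA
    · have hu : u ∈ S := by
        by_contra hu
        have : u = v := by simpa [districtOf, hu] using hx
        exact hu (this ▸ hv₀)
      exact hcl (.w u) (by simp [districtOf, hu]) _ hx (hw hu) (adj_w_r u i)
    · exact hb_all e
    · exact hb'_all e i
    · exact hcl _ (by simp [districtOf]) _ hx (hb'_all e i) (adj_b'_c e i j)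
  · by_cases hvS : v ∈ S
    · refine connected_of_closed (x := .r v ⟨0, hR⟩) (by simp [districtOf]) fun A hA hcl => ?_
      rintro (u | ⟨u, i⟩ | e | ⟨e, i⟩ | ⟨e, i, j⟩) hx
      · simp only [districtOf, Set.mem_preimage, Set.mem_singleton_iff] at hx
        split_ifs at hx with h
        · exact absurd hx.symm hv
        · exact absurd (hx ▸ hvS) h
      · simp only [districtOf, Set.mem_preimage, Set.mem_singleton_iff] at hx
        split_ifs at hx with h
        · exact absurd hx.symm hv
        · subst hx
          have : i = ⟨0, hR⟩ := by
            ext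
            by_contra hi
            exact h ⟨hvS, hi⟩
          exact this ▸ hA
      all_goals exact absurd (Eq.symm hx) hv
    · refine connected_of_closed (x := .w v) (by simp [districtOf, hvS]) fun A hA hcl => ?_
      rintro (u | ⟨u, i⟩ | e | ⟨e, i⟩ | ⟨e, i, j⟩) hx
      · simp only [districtOf, Set.mem_preimage, Set.mem_singleton_iff] at hx
        split_ifs at hx with h
        · exact absurd hx.symm hv
        · exact hx ▸ hA
      · have hx' := hx
        simp only [districtOf, Set.mem_preimage, Set.mem_singleton_iff] at hx
        split_ifs at hx with h
        · exact absurd hx.symm hv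
        · subst hx
          exact hcl _ (by simp [districtOf, hvS]) _ hx' hA (adj_w_r u i)
      all_goals exact absurd (Eq.symm hx) hv

lemma districtOf_wonBy [Finite V] {S : Set V} (hSl : S.ncard ≤ l) {v₀ : V} (hv₀ : v₀ ∈ S)
    (hm : Nat.card G.edgeSet = m) (hn : 0 < n) (hm0 : 0 < m) :
    WonBy cColor CColor.blue
      (districtOf S v₀ ⁻¹' {v₀} : Set (CVert V G.edgeSet n m l)) := by
  classical
  set N := n * l * (m + 1) with hN
  have hblue : m * (N + 1) ≤
      {x ∈ (districtOf S v₀ ⁻¹' {v₀} : Set (CVert V G.edgeSet n m l)) |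
        cColor x = CColor.blue}.ncard := by
    have := card_le_ncard (α := CVert V G.edgeSet n m l) (ι := G.edgeSet × Option (Fin N))
      (s := {x ∈ (districtOf S v₀ ⁻¹' {v₀} : Set (CVert V G.edgeSet n m l)) |
        cColor x = CColor.blue})
      (fun p => match p with
        | (e, none) => .b e
        | (e, some i) => .b' e i)
      (by rintro ⟨e, _ | i⟩ ⟨e', _ | i'⟩ h <;> simp_all)
      (by rintro ⟨e, _ | i⟩ <;> simp [districtOf, cColor])
    simpa [Nat.card_prod, hm] using this
  have hnl : l ≤ m * N := by
    have : 0 < m * (n * (m + 1)) := by positivity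
    calc l ≤ l * (m * (n * (m + 1))) := Nat.le_mul_of_pos_right l this
      _ = m * N := by rw [hN]; ring
  have hmain : ∀ k ≤ m * N, k < m * (N + 1) := fun k hk => by
    rw [mul_add]; omega
  have hwS : ∀ {u}, (CVert.w u : CVert V G.edgeSet n m l) ∈
      (districtOf S v₀ ⁻¹' {v₀} : Set (CVert V G.edgeSet n m l)) → u ∈ S := by
    intro u hu
    by_contra h
    have : u = v₀ := by simpa [districtOf, h] using hu
    exact h (this ▸ hv₀)
  have hrS : ∀ {u i}, (CVert.r u i : CVert V G.edgeSet n m l) ∈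
      (districtOf S v₀ ⁻¹' {v₀} : Set (CVert V G.edgeSet n m l)) → u ∈ S := by
    intro u i hu
    by_contra h
    have : u = v₀ := by simpa [districtOf, h] using hu
    exact h (this ▸ hv₀)
  rintro (_ | _ | _ | e) hj
  · exact absurd rfl hj
  · refine lt_of_lt_of_le (hmain _ ?_) hblue
    refine (ncard_le_card (ι := S × Fin (n * m * (m + 1))) (fun p => .r p.1 p.2) ?_).trans ?_
    · rintro (u | ⟨u, i⟩ | e | ⟨e, i⟩ | ⟨e, i, j⟩) ⟨hx, hc⟩
      · cases hc
      · exact ⟨(⟨u, hrS hx⟩, i), rfl⟩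
      all_goals cases hc
    · rw [Nat.card_prod, Nat.card_fin, Nat.card_coe_set_eq]
      calc S.ncard * (n * m * (m + 1)) ≤ l * (n * m * (m + 1)) := Nat.mul_le_mul_right _ hSl
        _ = m * N := by rw [hN]; ring
  · refine lt_of_lt_of_le (hmain _ ?_) hblue
    refine (ncard_le_card (ι := S) (fun p => .w p.1) ?_).trans ?_
    · rintro (u | ⟨u, i⟩ | e | ⟨e, i⟩ | ⟨e, i, j⟩) ⟨hx, hc⟩
      · exact ⟨⟨u, hwS hx⟩, rfl⟩
      all_goals cases hc
    · rw [Nat.card_coe_set_eq]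
      exact hSl.trans hnl
  · refine lt_of_lt_of_le (hmain _ ?_) hblue
    refine (ncard_le_card (ι := Fin N × Fin m) (fun p => .c e p.1 p.2) ?_).trans ?_
    · rintro (u | ⟨u, i⟩ | e | ⟨e, i⟩ | ⟨e, i, j⟩) ⟨hx, hc⟩
      · cases hc
      · cases hc
      · cases hc
      · cases hc
      · cases hc
        exact ⟨(i, j), rfl⟩
    · simp [mul_comm]

/-! ### From a winning partition to a connected vertex cover -/

/-- The vertex `b'^e_i` together with its leaves. -/
def block (e : G.edgeSet) (i : Fin (n * l * (m + 1))) : Set (CVert V G.edgeSet n m l) :=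
  insert (.b' e i) (Set.range (.c e i))

lemma block_index_unique {e : G.edgeSet} {i j} {x : CVert V G.edgeSet n m l}
    (hi : x ∈ block e i) (hj : x ∈ block e j) : i = j := by
  rcases hi with rfl | ⟨_, rfl⟩ <;> rcases hj with h | ⟨_, h⟩ <;> cases h <;> rfl

lemma subset_block {D : Set (CVert V G.edgeSet n m l)}
    (hD : ((cGraph G n m l).induce D).Connected) {e : G.edgeSet} (hb : .b e ∉ D) {i}
    {x} (hx : x ∈ D) (hxi : x ∈ block e i) : D ⊆ block e i := by
  refine subset_of_closed hD hx hxi fun a ha b hbD haA hab => ?_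
  revert ha hbD haA
  refine adj_elim (p := fun a b => a ∈ D → b ∈ D → a ∈ block e i → b ∈ block e i)
    ?_ ?_ ?_ ?_ hab
  · simp [block]
  · simp [block]
  · intro e' i'
    simp only [block, Set.mem_insert_iff, Set.mem_range, reduceCtorEq, exists_false, or_false,
      CVert.b'.injEq, IsEmpty.forall_iff, implies_true, true_and]
    rintro - h ⟨rfl, -⟩
    exact absurd h hb
  · simp only [block, Set.mem_insert_iff, Set.mem_range, reduceCtorEq, exists_false, or_false,
      CVert.b'.injEq, CVert.c.injEq, false_or]
    refine fun e' i' j => ⟨?_, ?_⟩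
    · rintro - - ⟨rfl, rfl⟩
      exact ⟨j, rfl, rfl, rfl⟩
    · rintro - - ⟨j', rfl, rfl, rfl⟩
      exact ⟨rfl, rfl⟩

lemma subset_singleton_r {D : Set (CVert V G.edgeSet n m l)}
    (hD : ((cGraph G n m l).induce D).Connected) {v i} (hw : .w v ∉ D) (hx : .r v i ∈ D) :
    D ⊆ {.r v i} := by
  refine subset_of_closed hD hx rfl fun a ha b hbD haA hab => ?_
  rw [Set.mem_singleton_iff] at haA
  subst haA
  have := adj_elim (p := fun a b => a = .r v i → b = .w v) (by simp) (by simp) (by simp) (by simp)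
    hab rfl
  exact absurd (this ▸ hbD) hw

lemma subset_singleton_c {D : Set (CVert V G.edgeSet n m l)}
    (hD : ((cGraph G n m l).induce D).Connected) {e i j} (hw : .b' e i ∉ D) (hx : .c e i j ∈ D) :
    D ⊆ {.c e i j} := by
  refine subset_of_closed hD hx rfl fun a ha b hbD haA hab => ?_
  rw [Set.mem_singleton_iff] at haA
  subst haA
  have := adj_elim (p := fun a b => a = .c e i j → b = .b' e i) (by simp) (by simp) (by simp)
    (by simp +contextual) hab rfl
  exact absurd (this ▸ hbD) hw

variable {P : Set (Set (CVert V G.edgeSet n m l))} {W : Set (CVert V G.edgeSet n m l)}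

lemma notMem_of_ne {α : Type*} {H : SimpleGraph α} {k : ℕ} {P : Set (Set α)} {W D : Set α}
    (hP : IsKPartition H k P) (hW : W ∈ P) (hD : D ∈ P) {x y : α} (hx : x ∈ D) (hxW : x ∉ W)
    (hy : y ∈ W) : y ∉ D := fun hyD =>
  Set.disjoint_left.1 (hP.2.2.2.1 hD hW (fun h => hxW (h ▸ hx))) hyD hy

lemma exists_b_mem [Finite V] (hP : IsKPartition (cGraph G n m l) n P) (hW : W ∈ P)
    (hwon : WonBy cColor CColor.blue W) (hnm : n ≤ m + 1) : ∃ e, .b e ∈ W := by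
  by_contra! hb
  -- A winning district has a blue vertex, which has to be some `b'^e_i`.
  have hblue : {x ∈ W | cColor x = CColor.blue}.Nonempty := by
    rw [← Set.ncard_pos]
    exact (Nat.zero_le _).trans_lt (hwon CColor.red (by simp))
  obtain ⟨x, hxW, hxc⟩ := hblue
  obtain ⟨e, i, rfl⟩ : ∃ e i, x = .b' e i := by
    rcases x with (u | ⟨u, i⟩ | e | ⟨e, i⟩ | ⟨e, i, j⟩)
    · cases hxc
    · cases hxc
    · exact absurd hxW (hb e)
    · exact ⟨e, i, rfl⟩
    · cases hxc
  have hsub : W ⊆ block e i := subset_block (hP.2.2.1 W hW) (hb e) hxW (by simp [block])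
  -- Its only blue vertex is outnumbered as soon as one leaf of it is in `W`.
  have hc : ∀ j, .c e i j ∉ W := by
    intro j hj
    have h1 : {x ∈ W | cColor x = CColor.blue}.ncard ≤ 1 := by
      have : Nonempty (CVert V G.edgeSet n m l) := ⟨.b e⟩
      refine (Set.ncard_le_one_iff_subset_singleton (Set.toFinite _)).2 ⟨.b' e i, ?_⟩
      rintro x ⟨hx, hxc⟩
      rcases hsub hx with rfl | ⟨j', rfl⟩
      · rfl
      · cases hxc
    have h2 : 0 < {x ∈ W | cColor x = CColor.ce e}.ncard := by
      rw [Set.ncard_pos]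
      exact ⟨_, hj, rfl⟩
    have := hwon (CColor.ce e) (by simp)
    omega
  -- So `W = {b'^e_i}`; its `m` leaves and `b^e` lie in `m + 1` further districts.
  have := card_add_one_le hP hW (ι := Option (Fin m))
    (fun o => o.elim (.b e) (.c e i))
    (fun o => o.elim {y | ∀ j, y ≠ .c e i j} (fun j => {.c e i j}))
    (by rintro (_ | j) (_ | j') <;> simp)
    (by
      rintro (_ | j)
      · exact hb e
      · exact hc j)
    (by
      rintro (_ | j) D hD hx
      · rintro y hy j rfl
        have hb' : .b' e i ∉ D := notMem_of_ne hP hW hD hx (hb e) hxW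
        have := subset_singleton_c (hP.2.2.1 D hD) hb' hy hx
        simp at this
      · exact subset_singleton_c (hP.2.2.1 D hD) (notMem_of_ne hP hW hD hx (hc j) hxW) hx)
  simp at this
  omega

/-- At most `n - 1` blocks of a gadget with `b^f ∈ W` are not contained in `W`, and each of the
others contributes `m` vertices of color `C^f`. -/
lemma le_ncard_ce [Finite V] (hP : IsKPartition (cGraph G n m l) n P) (hW : W ∈ P)
    {f : G.edgeSet} (hf : .b f ∈ W) :
    n * l * (m + 1) * m ≤ {x ∈ W | cColor x = CColor.ce f}.ncard + (n - 1) * m := by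
  set Gd : Set (Fin (n * l * (m + 1))) := {i | block f i ⊆ W} with hGd
  have hbad : Gdᶜ.ncard ≤ n - 1 := by
    have hex : ∀ i : (Gdᶜ : Set _), ∃ x ∈ block f i.1, x ∉ W := fun i =>
      Set.not_subset.1 i.2
    choose x hxb hxW using hex
    have := card_add_one_le hP hW x (fun i => block f i.1)
      (fun i j hij => Subtype.ext (block_index_unique (hxb i) hij))
      hxW
      (fun i D hD hx => subset_block (hP.2.2.1 D hD)
        (notMem_of_ne hP hW hD hx (hxW i) hf) hx (hxb i))
    rw [Nat.card_coe_set_eq] at this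
    omega
  have hgood : Gd.ncard * m ≤ {x ∈ W | cColor x = CColor.ce f}.ncard := by
    have := card_le_ncard (α := CVert V G.edgeSet n m l) (ι := Gd × Fin m)
      (s := {x ∈ W | cColor x = CColor.ce f}) (fun p => .c f p.1 p.2)
      (by
        rintro ⟨⟨i, hi⟩, j⟩ ⟨⟨i', hi'⟩, j'⟩ h
        simp_all)
      (by
        rintro ⟨⟨i, hi⟩, j⟩
        exact ⟨hi (Or.inr ⟨j, rfl⟩), rfl⟩)
    simpa [Nat.card_prod] using this
  have htot := Set.ncard_add_ncard_compl Gd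
  rw [Nat.card_fin] at htot
  calc n * l * (m + 1) * m = Gd.ncard * m + Gdᶜ.ncard * m := by
        rw [← add_mul, htot]
    _ ≤ _ := Nat.add_le_add hgood (Nat.mul_le_mul_right _ hbad)

lemma ncard_blue_le [Finite V] (hP : IsKPartition (cGraph G n m l) n P) (hW : W ∈ P)
    (hb : ∃ e, .b e ∈ W) :
    {x ∈ W | cColor x = CColor.blue}.ncard ≤
      {e : G.edgeSet | .b e ∈ W}.ncard * (n * l * (m + 1) + 1) := by
  have hb' : ∀ e i, .b' e i ∈ W → .b e ∈ W := by
    intro e i hi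
    by_contra h
    obtain ⟨e', he'⟩ := hb
    have := subset_block (hP.2.2.1 W hW) h hi (Set.mem_insert _ _) he'
    simp [block] at this
  have := ncard_le_card (s := {x ∈ W | cColor x = CColor.blue})
    (ι := {e : G.edgeSet | .b e ∈ W} × Option (Fin (n * l * (m + 1))))
    (fun p => p.2.elim (.b p.1) (.b' p.1)) (by
      rintro (u | ⟨u, i⟩ | e | ⟨e, i⟩ | ⟨e, i, j⟩) ⟨hx, hc⟩
      · cases hc
      · cases hc
      · exact ⟨(⟨e, hx⟩, none), rfl⟩
      · exact ⟨(⟨e, hb' e i hx⟩, some i), rfl⟩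
      · cases hc)
  rwa [Nat.card_prod, Nat.card_coe_set_eq, Finite.card_option, Nat.card_fin] at this

lemma all_b_mem [Finite V] (hP : IsKPartition (cGraph G n m l) n P) (hW : W ∈ P)
    (hwon : WonBy cColor CColor.blue W) (hm : Nat.card G.edgeSet = m) (hn : 0 < n) (hl : 1 ≤ l)
    (hb : ∃ e, .b e ∈ W) (e : G.edgeSet) : .b e ∈ W := by
  by_contra he
  have hblue := ncard_blue_le hP hW hb
  obtain ⟨f, hf⟩ := hb
  have hce := le_ncard_ce hP hW hf
  have hlt := hwon (CColor.ce f) (by simp)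
  have ht : {e : G.edgeSet | .b e ∈ W}.ncard + 1 ≤ m := by
    have h1 := Set.ncard_add_ncard_compl {e : G.edgeSet | .b e ∈ W}
    have h2 : 0 < ({e : G.edgeSet | .b e ∈ W}ᶜ).ncard := by
      rw [Set.ncard_pos]
      exact ⟨e, he⟩
    omega
  generalize {e : G.edgeSet | .b e ∈ W}.ncard = t at *
  generalize hN : n * l * (m + 1) = N at *
  have h3 : t * (N + 1) + (N + 1) ≤ m * (N + 1) := by
    calc t * (N + 1) + (N + 1) = (t + 1) * (N + 1) := by ring
      _ ≤ _ := Nat.mul_le_mul_right _ ht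
  have h4 : n * m + n ≤ N := by
    calc n * m + n = n * 1 * (m + 1) := by ring
      _ ≤ n * l * (m + 1) := by gcongr
      _ = N := hN
  have h5 : (n - 1) * m + m = n * m := by
    calc (n - 1) * m + m = (n - 1 + 1) * m := by ring
      _ = n * m := by rw [Nat.sub_add_cancel hn]
  have h6 : m * (N + 1) = N * m + m := by ring
  omega

lemma ncard_white_le [Finite V] (hP : IsKPartition (cGraph G n m l) n P) (hW : W ∈ P)
    (hwon : WonBy cColor CColor.blue W) (hm : Nat.card G.edgeSet = m) (hm0 : 0 < m) (hn : 0 < n)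
    (hb : ∃ e, .b e ∈ W) : {v : V | .w v ∈ W}.ncard ≤ l := by
  have hblue := ncard_blue_le hP hW hb
  have hred := hwon CColor.red (by simp)
  have ht : {e : G.edgeSet | .b e ∈ W}.ncard ≤ m := by
    have := Set.ncard_add_ncard_compl {e : G.edgeSet | .b e ∈ W}
    omega
  have hblue' := hblue.trans (Nat.mul_le_mul_right _ ht)
  set S : Set V := {v : V | .w v ∈ W}
  set X : Set (S × Fin (n * m * (m + 1))) := {p | .r p.1.1 p.2 ∈ W} with hX
  have h1 : X.ncard ≤ {x ∈ W | cColor x = CColor.red}.ncard :=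
    Set.ncard_le_ncard_of_injOn (fun p => .r p.1.1 p.2) (fun p hp => ⟨hp, rfl⟩) (by
      rintro ⟨⟨v, hv⟩, i⟩ - ⟨⟨v', hv'⟩, i'⟩ - h
      simp_all)
  have h2 : Xᶜ.ncard + 1 ≤ n := by
    rw [← Nat.card_coe_set_eq]
    refine card_add_one_le hP hW (fun p : (Xᶜ : Set _) => .r p.1.1.1 p.1.2)
      (fun p => {.r p.1.1.1 p.1.2}) ?_ (fun p => p.2) ?_
    · rintro ⟨⟨⟨v, hv⟩, i⟩, hp⟩ ⟨⟨⟨v', hv'⟩, i'⟩, hp'⟩ h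
      simp_all
    · exact fun p D hD hx => subset_singleton_r (hP.2.2.1 D hD)
        (notMem_of_ne hP hW hD hx p.2 p.1.1.2) hx
  have h3 := Set.ncard_add_ncard_compl X
  rw [Nat.card_prod, Nat.card_coe_set_eq, Nat.card_fin] at h3
  by_contra! hlt
  have h4 : (l + 1) * (n * m * (m + 1)) ≤ S.ncard * (n * m * (m + 1)) :=
    Nat.mul_le_mul_right _ hlt
  have h5 : (l + 1) * (n * m * (m + 1)) = m * (n * l * (m + 1)) + n * m * (m + 1) := by ring
  have h6 : m * (n * l * (m + 1) + 1) = m * (n * l * (m + 1)) + m := by ring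
  have h7 : n + m ≤ n * m * (m + 1) := by
    have e1 : n * m * (m + 1) = n * m * m + n * m := by ring
    have e2 : n ≤ n * m := Nat.le_mul_of_pos_right n hm0
    have e3 : m ≤ n * m := Nat.le_mul_of_pos_left m hn
    have e4 : n * m ≤ n * m * m := Nat.le_mul_of_pos_right _ hm0
    omega
  omega

/-- The subset of `H` spanned by `A ⊆ V` inside `W`: the stars of the vertices of `A`, and the
gadgets of the edges with an endpoint `v ∈ A` such that `w^v ∈ W`. -/
def spanIn (W : Set (CVert V G.edgeSet n m l)) (A : Set V) : Set (CVert V G.edgeSet n m l) :=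
  let touches (e : G.edgeSet) : Prop := ∃ v ∈ A, v ∈ (e : Sym2 V) ∧ .w v ∈ W
  {x | match x with
    | .w v => v ∈ A
    | .r v _ => v ∈ A
    | .b e => touches e
    | .b' e _ => touches e
    | .c e _ _ => touches e}

lemma white_connected (hWc : ((cGraph G n m l).induce W).Connected) {s : V} (hs : .w s ∈ W) :
    (G.induce {v : V | .w v ∈ W}).Connected := by
  refine connected_of_closed (x := s) hs fun A hA hcl => ?_
  have : W ⊆ spanIn W A := by
    refine subset_of_closed hWc hs hA fun a ha b hb haA hab => ?_
    revert ha hb haA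
    refine adj_elim (p := fun a b => a ∈ W → b ∈ W → a ∈ spanIn W A → b ∈ spanIn W A)
      (fun v i => ⟨fun _ _ h => h, fun _ _ h => h⟩) (fun v e hv => ⟨?_, ?_⟩)
      (fun e i => ⟨fun _ _ h => h, fun _ _ h => h⟩)
      (fun e i j => ⟨fun _ _ h => h, fun _ _ h => h⟩) hab
    · exact fun h1 _ h3 => ⟨v, h3, hv, h1⟩
    · rintro - h2 ⟨u, huA, hue, huW⟩
      show v ∈ A
      by_cases huv : u = v
      · exact huv ▸ huA
      · refine hcl u huW v h2 huA ?_
        have : (e : Sym2 V) = s(u, v) := (Sym2.mem_and_mem_iff huv).1 ⟨hue, hv⟩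
        rw [← SimpleGraph.mem_edgeSet, ← this]
        exact e.2
  exact fun v hv => this hv

/-- If `W` contains `b^e` and some vertex outside the gadget of `e`, it leaves the gadget through
an endpoint of `e`. -/
lemma exists_endpoint (hWc : ((cGraph G n m l).induce W).Connected) {e : G.edgeSet}
    (he : .b e ∈ W) {y} (hy : y ∈ W) (hye : y ≠ .b e) (hy' : ∀ i, y ∉ block e i) :
    ∃ v ∈ (e : Sym2 V), .w v ∈ W := by
  by_contra! h
  have : W ⊆ {x | x = .b e ∨ ∃ i, x ∈ block e i} := by
    refine subset_of_closed hWc he (Or.inl rfl) fun a ha b hb haA hab => ?_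
    revert ha hb haA
    refine adj_elim (p := fun a b => a ∈ W → b ∈ W → (a = .b e ∨ ∃ i, a ∈ block e i) →
      (b = .b e ∨ ∃ i, b ∈ block e i)) ?_ ?_ ?_ ?_ hab
    · simp [block]
    · intro v e' hv
      refine ⟨by simp [block], ?_⟩
      rintro - hw (h' | ⟨i, h'⟩)
      · cases h'
        exact absurd hw (h v hv)
      · simp [block] at h'
    · simp [block]
    · simp [block, eq_comm]
  rcases this hy with h | ⟨i, h⟩
  · exact hye h
  · exact hy' i h

end Aux

/-- reduction correctness for Theorem 3.3: `G` has a connected vertex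
cover of size at most `l` iff the auxiliary graph `H` admits a partition into `n`
districts with at least one district won by blue. -/
theorem stmt1 {V : Type*} [Fintype V] (G : SimpleGraph V) (hG : G.Connected)
    (n m : ℕ) (hn : Fintype.card V = n) (hn2 : 2 ≤ n)
    (hm : G.edgeSet.ncard = m)
    (l : ℕ) (hl : 2 ≤ l) :
    (∃ S : Set V, S.ncard ≤ l ∧ (∀ ⦃u v : V⦄, G.Adj u v → u ∈ S ∨ v ∈ S) ∧
      (G.induce S).Connected) ↔
    (∃ P : Set (Set (CVert V ↥G.edgeSet n m l)),
      IsKPartition (cGraph G n m l) n P ∧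
      ∃ W ∈ P, WonBy cColor CColor.blue W) := by
  have hmc : Nat.card G.edgeSet = m := by rw [Nat.card_coe_set_eq, hm]
  have hnm : n ≤ m + 1 := by
    have := hG.card_vert_le_card_edgeSet_add_one
    rwa [Nat.card_eq_fintype_card, hn, hmc] at this
  have hm0 : 0 < m := by omega
  have hn0 : 0 < n := by omega
  constructor
  · rintro ⟨S, hSl, hcov, hS⟩
    obtain ⟨⟨v₀, hv₀⟩⟩ := hS.nonempty
    have hR : 0 < n * m * (m + 1) := by positivity
    have hpart := isKPartition_fibers (H := cGraph G n m l) (districtOf S v₀)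
      (districtOf_surjective S v₀ hR) (districtOf_connected hS hcov hv₀ hR)
    rw [Nat.card_eq_fintype_card, hn] at hpart
    exact ⟨_, hpart, _, ⟨v₀, rfl⟩, districtOf_wonBy hSl hv₀ hmc hn0 hm0⟩
  · rintro ⟨P, hP, W, hW, hwon⟩
    have hb := exists_b_mem hP hW hwon hnm
    have hall := all_b_mem hP hW hwon hmc hn0 (by omega) hb
    have hWc := hP.2.2.1 W hW
    by_cases hS : ∃ s, .w s ∈ W
    · obtain ⟨s, hs⟩ := hS
      refine ⟨{v | .w v ∈ W}, ncard_white_le hP hW hwon hmc hm0 hn0 hb, fun u v huv => ?_,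
        white_connected hWc hs⟩
      obtain ⟨x, hx, hxW⟩ := exists_endpoint hWc (hall ⟨s(u, v), huv⟩) hs (by simp)
        (by simp [block])
      rcases Sym2.mem_iff.1 hx with rfl | rfl
      exacts [Or.inl hxW, Or.inr hxW]
    · -- Without white vertices `W` stays in one gadget, so `G` has only one edge.
      push Not at hS
      obtain ⟨⟨e, he⟩, heW⟩ := hb
      induction e using Sym2.ind with
      | _ a b =>
        refine ⟨{a}, by simp; omega, fun u v huv => ?_, ?_⟩
        · by_contra! hne
          obtain ⟨x, hx, hxW⟩ := exists_endpoint hWc heW (hall ⟨s(u, v), huv⟩)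
            (by
              intro h
              have h' : s(u, v) = s(a, b) := congrArg Subtype.val (CVert.b.inj h)
              rcases Sym2.eq_iff.1 h' with ⟨rfl, -⟩ | ⟨-, rfl⟩
              · exact hne.1 rfl
              · exact hne.2 rfl)
            (by simp [block])
          exact hS x hxW
        · exact connected_of_closed (x := a) rfl fun A hA _ => by simpa using hA
end

section
/- Let G be a finite connected simple graph whose vertices are each colored by one of c ≥ 1 candidates, one of which is the distinguished candidate blue. Suppose the vertex set of G admits a partition into k districts (nonempty parts each inducing a connected subgraph) in which blue wins at least w districts. Then the vertex set of G admits a partition into k districts in which at least ⌊w/(2c+2)⌋ of the districts are singletons consisting of a single blue vertex (and such singleton districts are won by blue). -/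
open Finset in
/-- The `s` smallest values of `f` on `A` have average at most that of `f` on `A`. -/
lemma exists_subset_sum_le {ι : Type*} [DecidableEq ι] (f : ι → ℕ) (s m : ℕ) :
    ∀ A : Finset ι, #A = s + m →
      ∃ B ⊆ A, #B = s ∧ #A * ∑ i ∈ B, f i ≤ s * ∑ i ∈ A, f i := by
  induction m with
  | zero => intro A hA; exact ⟨A, subset_rfl, by simpa using hA, by simp [hA]⟩
  | succ m ih =>
    intro A hA
    have hne : A.Nonempty := card_pos.1 (by omega)
    -- Dropping a maximal element does not raise the average.
    obtain ⟨x, hx, hmax⟩ := exists_max_image A f hne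
    have hcard : #(A.erase x) = s + m := by rw [card_erase_of_mem hx]; omega
    obtain ⟨B, hBA, hB, hle⟩ := ih _ hcard
    refine ⟨B, hBA.trans (erase_subset _ _), hB, ?_⟩
    have hsum : ∑ i ∈ A.erase x, f i + f x = ∑ i ∈ A, f i := sum_erase_add _ _ hx
    have hx' : ∑ i ∈ A, f i ≤ #A * f x := by
      simpa using sum_le_card_nsmul A f (f x) hmax
    rcases Nat.eq_zero_or_pos (s + m) with h0 | hpos
    · have : B = ∅ := card_eq_zero.1 (by omega)
      simp [this]
    · rw [hcard] at hle
      rw [hA] at hx' ⊢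
      have h1 : (s + (m + 1)) * ∑ i ∈ A.erase x, f i ≤ (s + m) * ∑ i ∈ A, f i := by
        nlinarith
      refine Nat.le_of_mul_le_mul_left (c := s + m) ?_ hpos
      calc (s + m) * ((s + (m + 1)) * ∑ i ∈ B, f i)
          = (s + (m + 1)) * ((s + m) * ∑ i ∈ B, f i) := by ring
        _ ≤ (s + (m + 1)) * (s * ∑ i ∈ A.erase x, f i) := Nat.mul_le_mul_left _ hle
        _ = s * ((s + (m + 1)) * ∑ i ∈ A.erase x, f i) := by ring
        _ ≤ s * ((s + m) * ∑ i ∈ A, f i) := Nat.mul_le_mul_left _ h1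
        _ = (s + m) * (s * ∑ i ∈ A, f i) := by ring

open Finset Classical in
/-- A component of a forest is a tree, so its degrees sum to twice its order minus two. -/
lemma sum_degree_component {V : Type*} [Fintype V] (F : SimpleGraph V) (hF : F.IsAcyclic)
    (K : F.ConnectedComponent) :
    ∑ v with F.connectedComponentMk v = K, F.degree v + 2
      = 2 * #{v | F.connectedComponentMk v = K} := by
  have htree : (F.induce K.supp).IsTree :=
    ⟨K.connected_toSimpleGraph, hF.induce _⟩
  have h1 := htree.card_edgeFinset
  have h2 := (F.induce K.supp).sum_degrees_eq_twice_card_edges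
  have h3 : ∀ v : K.supp, (F.induce K.supp).degree v = F.degree v := fun v => by
    convert SimpleGraph.degree_induce_of_neighborSet_subset (G := F) (s := K.supp) (v := v) ?_
    intro u hu
    exact (K.mem_supp_congr_adj hu).1 v.2
  have h4 : ∑ v : K.supp, F.degree v = ∑ v with F.connectedComponentMk v = K, F.degree v := by
    symm
    apply Finset.sum_subtype
    intro x
    simp
  have h5 : Fintype.card K.supp = #{v | F.connectedComponentMk v = K} := by
    apply Fintype.card_of_subtype
    intro x
    simp
  simp only [h3] at h2
  omega

open Finset Classical in
lemma card_edges_add_card_components {V : Type*} [Fintype V] (F : SimpleGraph V)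
    [Fintype F.edgeSet] (hF : F.IsAcyclic) :
    #F.edgeFinset + Nat.card F.ConnectedComponent = Fintype.card V := by
  have h1 : ∑ v, F.degree v = 2 * #F.edgeFinset := by
    convert F.sum_degrees_eq_twice_card_edges
  have h2 := Finset.sum_fiberwise (univ : Finset V) F.connectedComponentMk (fun v => F.degree v)
  have h3 : ∑ K : F.ConnectedComponent, (∑ v with F.connectedComponentMk v = K, F.degree v + 2)
      = ∑ K : F.ConnectedComponent, 2 * #{v | F.connectedComponentMk v = K} :=
    Finset.sum_congr rfl fun K _ => sum_degree_component F hF K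
  have h4 := Finset.card_eq_sum_card_fiberwise (s := (univ : Finset V))
    (t := (univ : Finset F.ConnectedComponent)) (f := F.connectedComponentMk) (by simp)
  rw [Finset.sum_add_distrib, h2, ← Finset.mul_sum, ← h4] at h3
  simp only [sum_const, card_univ, smul_eq_mul] at h3
  rw [Nat.card_eq_fintype_card]
  omega

lemma isKPartition_components {V : Type*} [Fintype V] {F G : SimpleGraph V} (hle : F ≤ G) :
    IsKPartition G (Nat.card F.ConnectedComponent)
      (Set.range (SimpleGraph.ConnectedComponent.supp (G := F))) := by
  refine ⟨?_, ?_, ?_, ?_, ?_⟩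
  · rw [← Set.image_univ, Set.ncard_image_of_injective _
      SimpleGraph.ConnectedComponent.supp_injective, Set.ncard_univ]
  · rintro _ ⟨K, rfl⟩
    exact K.nonempty_supp
  · rintro _ ⟨K, rfl⟩
    refine SimpleGraph.Connected.mono ?_ K.connected_toSimpleGraph
    intro u v huv
    exact hle huv
  · rintro _ ⟨K, rfl⟩ _ ⟨K', rfl⟩ hne
    exact F.pairwise_disjoint_supp_connectedComponent fun h => hne (by rw [h])
  · rw [Set.sUnion_range]
    exact F.iUnion_connectedComponentSupp

/-- Every partition into districts is the family of components of a forest in `G`: take a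
spanning forest of the graph of those edges of `G` that lie inside a district. -/
lemma exists_forest {V : Type*} [Fintype V] {G : SimpleGraph V} {k : ℕ} {P : Set (Set V)}
    (hP : IsKPartition G k P) :
    ∃ F ≤ G, F.IsAcyclic ∧ P = Set.range (SimpleGraph.ConnectedComponent.supp (G := F)) := by
  obtain ⟨-, hne, hconn, hdisj, hcov⟩ := hP
  let H : SimpleGraph V :=
    { Adj := fun u v => G.Adj u v ∧ ∃ D ∈ P, u ∈ D ∧ v ∈ D
      symm := ⟨fun u v ⟨h, D, hD, hu, hv⟩ => ⟨h.symm, D, hD, hv, hu⟩⟩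
      loopless := ⟨fun u h => G.loopless.irrefl u h.1⟩ }
  have hfwd : ∀ D ∈ P, ∀ u v, u ∈ D → H.Reachable u v → v ∈ D := by
    rintro D hD u v hu ⟨p⟩
    induction p with
    | nil => exact hu
    | cons h p ih =>
      obtain ⟨-, D', hD', hu', hv'⟩ := h
      have : D = D' := by
        by_contra hn
        exact Set.disjoint_left.1 (hdisj hD hD' hn) hu hu'
      exact ih (this ▸ hv')
  have hbwd : ∀ D ∈ P, ∀ u v, u ∈ D → v ∈ D → H.Reachable u v := by
    intro D hD u v hu hv
    let φ : G.induce D →g H :=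
      { toFun := fun x => x.1
        map_rel' := fun {a b} h => ⟨h, D, hD, a.2, b.2⟩ }
    exact ((hconn D hD).preconnected ⟨u, hu⟩ ⟨v, hv⟩).map φ
  obtain ⟨F, hFH, hF, hreach⟩ := H.exists_isAcyclic_reachable_eq_le
  have hsupp : ∀ D ∈ P, ∀ v ∈ D, (F.connectedComponentMk v).supp = D := by
    intro D hD v hv
    ext u
    rw [SimpleGraph.ConnectedComponent.mem_supp_iff, SimpleGraph.ConnectedComponent.eq, hreach]
    exact ⟨fun h => hfwd D hD v u hv h.symm, fun h => hbwd D hD u v h hv⟩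
  refine ⟨F, fun u v h => (hFH h).1, hF, ?_⟩
  ext D
  constructor
  · intro hD
    obtain ⟨v, hv⟩ := hne D hD
    exact ⟨_, hsupp D hD v hv⟩
  · rintro ⟨K, rfl⟩
    induction K using SimpleGraph.ConnectedComponent.ind with
    | h v =>
      obtain ⟨D, hD, hv⟩ : v ∈ ⋃₀ P := hcov ▸ Set.mem_univ v
      rw [hsupp D hD v hv]
      exact hD

open Finset Classical in
/-- Blue vertices make up at least a `1/c` fraction of a won district, whereas the average degree
in a tree is less than `2`. -/
lemma exists_blue_degree_lt {V C : Type*} [Fintype V] [Fintype C] (F : SimpleGraph V)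
    (hF : F.IsAcyclic) (color : V → C) (blue : C) (K : F.ConnectedComponent)
    (hK : WonBy color blue K.supp) :
    ∃ v ∈ K.supp, color v = blue ∧ F.degree v < 2 * Fintype.card C := by
  set D : Finset V := {v | F.connectedComponentMk v = K} with hD
  have hsum : ∑ v ∈ D, F.degree v + 2 = 2 * #D := sum_degree_component F hF K
  have hncard : ∀ j, {x ∈ K.supp | color x = j}.ncard = #{x ∈ D | color x = j} := by
    intro j
    rw [← Set.ncard_coe_finset]
    congr 1
    ext x
    simp [hD]
  have hmaj : ∀ j, #{x ∈ D | color x = j} ≤ #{x ∈ D | color x = blue} := by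
    intro j
    by_cases hj : j = blue
    · rw [hj]
    · have := hK j hj
      rw [hncard, hncard] at this
      exact this.le
  have hcard : #D ≤ Fintype.card C * #{x ∈ D | color x = blue} := by
    rw [Finset.card_eq_sum_card_fiberwise (s := D) (t := (univ : Finset C)) (f := color)
      (by simp)]
    simpa using Finset.sum_le_card_nsmul univ _ _ fun j _ => hmaj j
  by_contra! hcon
  have h1 : #{x ∈ D | color x = blue} * (2 * Fintype.card C)
      ≤ ∑ v ∈ D with color v = blue, F.degree v := by
    simpa using Finset.card_nsmul_le_sum {x ∈ D | color x = blue} (fun v => F.degree v)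
      (2 * Fintype.card C) fun v hv => by
        simp only [hD, mem_filter, mem_univ, true_and] at hv
        exact hcon v hv.1 hv.2
  have h2 : ∑ v ∈ D with color v = blue, F.degree v ≤ ∑ v ∈ D, F.degree v :=
    Finset.sum_le_sum_of_subset (filter_subset _ _)
  nlinarith

open Finset Classical in
/-- If the degrees of the vertices of `S` in a spanning tree sum to less than `k`, then enough
tree edges avoid `S` to form a forest with exactly `k` components, in which the vertices of `S`
are isolated. -/
lemma exists_partition_of_isTree {V : Type*} [Fintype V] {G T : SimpleGraph V} (hT : T.IsTree)
    (hTG : T ≤ G) (S : Finset V) (k : ℕ) (hk : k ≤ Fintype.card V)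
    (hS : ∑ v ∈ S, T.degree v < k) :
    ∃ Q, IsKPartition G k Q ∧ ∀ v ∈ S, {v} ∈ Q := by
  have hE := hT.card_edgeFinset
  have hU : #(S.biUnion fun v => T.incidenceFinset v) < k := by
    refine lt_of_le_of_lt (card_biUnion_le.trans ?_) hS
    simp
  have hsd := Finset.le_card_sdiff (S.biUnion fun v => T.incidenceFinset v) T.edgeFinset
  obtain ⟨E, hEsub, hEcard⟩ := Finset.exists_subset_card_eq
    (s := T.edgeFinset \ S.biUnion fun v => T.incidenceFinset v) (n := Fintype.card V - k) (by omega)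
  set F := SimpleGraph.fromEdgeSet (E : Set (Sym2 V)) with hFdef
  have hET : ∀ e ∈ E, e ∈ T.edgeSet := fun e he => by
    have := hEsub he
    simp only [mem_sdiff, SimpleGraph.mem_edgeFinset] at this
    exact this.1
  have hFT : F ≤ T := fun u v h => hET _ ((SimpleGraph.fromEdgeSet_adj _).1 h).1
  have hFE : #F.edgeFinset = #E := by
    congr 1
    ext e
    rw [SimpleGraph.mem_edgeFinset, hFdef, SimpleGraph.edgeSet_fromEdgeSet]
    constructor
    · exact fun h => h.1
    · exact fun h => ⟨h, T.not_isDiag_of_mem_edgeSet (hET e h)⟩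
  have hcount := card_edges_add_card_components F (hT.isAcyclic.anti hFT)
  have hkc : Nat.card F.ConnectedComponent = k := by omega
  refine ⟨_, hkc ▸ isKPartition_components (hFT.trans hTG), fun v hv => ?_⟩
  refine ⟨F.connectedComponentMk v, ?_⟩
  have hiso : ∀ u, ¬ F.Adj v u := by
    intro u h
    have h1 := hEsub (Finset.mem_coe.1 ((SimpleGraph.fromEdgeSet_adj _).1 h).1)
    simp only [mem_sdiff, mem_biUnion, not_exists, not_and] at h1
    refine h1.2 v hv ?_
    rw [SimpleGraph.mem_incidenceFinset]
    exact ⟨hFT h, by simp⟩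
  ext u
  rw [SimpleGraph.ConnectedComponent.mem_supp_iff, SimpleGraph.ConnectedComponent.eq,
    Set.mem_singleton_iff]
  constructor
  · intro h
    obtain ⟨p⟩ := h.symm
    cases p with
    | nil => rfl
    | cons h p => exact absurd h (hiso _)
  · rintro rfl
    rfl

lemma wonBy_singleton {V C : Type*} (color : V → C) (blue : C) {v : V} (hv : color v = blue) :
    WonBy color blue {v} := by
  intro j hj
  have h1 : {x ∈ ({v} : Set V) | color x = j} = ∅ := by
    ext x
    simp only [Set.mem_singleton_iff, Set.mem_ofPred_eq, Set.mem_empty_iff_false, iff_false]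
    rintro ⟨rfl, h⟩
    exact hj (h.symm.trans hv)
  have h2 : {x ∈ ({v} : Set V) | color x = blue} = {v} := by
    ext x
    simp only [Set.mem_singleton_iff, Set.mem_ofPred_eq, and_iff_left_iff_imp]
    rintro rfl
    exact hv
  rw [h1, h2]
  simp

/-- The degree budget: `s` chosen vertices with forest degrees at most `2c - 1` each (total `X`)
and total degree `Y` in the remaining edges use at most `k - 1` edges. -/
lemma budget {s c k a X Y : ℕ} (hs : 0 < s) (hc : 0 < c) (ha : s * (2 * c + 2) ≤ a) (hak : a ≤ k)
    (hX : X + s ≤ s * (2 * c)) (hY : a * Y ≤ s * (2 * (k - 1))) : X + Y < k := by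
  obtain ⟨m, rfl⟩ : ∃ m, k = m + 1 := ⟨k - 1, by
    have : 0 < s * (2 * c + 2) := by positivity
    omega⟩
  simp only [Nat.add_sub_cancel] at hY
  have h1 : (c + 1) * Y ≤ m := by
    refine Nat.le_of_mul_le_mul_left (c := 2 * s) ?_ (by omega)
    calc 2 * s * ((c + 1) * Y) = s * (2 * c + 2) * Y := by ring
      _ ≤ a * Y := Nat.mul_le_mul_right _ ha
      _ ≤ s * (2 * m) := hY
      _ = 2 * s * m := by ring
  have h2 : s * (2 * c + 2) ≤ m + 1 := ha.trans hak
  have h3 : (c + 1) * (X + Y) ≤ (c + 1) * m := by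
    have h4 : (c + 1) * (X + s) ≤ (c + 1) * (s * (2 * c)) := Nat.mul_le_mul_left _ hX
    have h5 : c * (s * (2 * c + 2)) ≤ c * (m + 1) := Nat.mul_le_mul_left _ h2
    nlinarith
  have := Nat.le_of_mul_le_mul_left h3 (by omega)
  omega

open Finset Classical in
/-- The selection step: `s` distinct blue vertices whose degrees in a suitable spanning tree sum
to less than `k`. -/
lemma exists_blue_set {V C : Type*} [Fintype V] [Fintype C] (G : SimpleGraph V)
    (hG : G.Connected) (color : V → C) (blue : C) (k s : ℕ) (hs : 0 < s)
    (P : Set (Set V)) (hP : IsKPartition G k P)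
    (hw : s * (2 * Fintype.card C + 2) ≤ {D ∈ P | WonBy color blue D}.ncard) :
    ∃ T ≤ G, T.IsTree ∧ ∃ S : Finset V, #S = s ∧ (∀ v ∈ S, color v = blue) ∧
      ∑ v ∈ S, T.degree v < k := by
  obtain ⟨F, hFG, hF, rfl⟩ := exists_forest hP
  have hFk : Nat.card F.ConnectedComponent = k := by
    rw [← hP.1, ← (isKPartition_components hFG).1]
  have hFcount := card_edges_add_card_components F hF
  obtain ⟨T, hFT, hTG, hT⟩ := hG.exists_isTree_le_of_le_of_isAcyclic hFG hF
  have hTcount := hT.card_edgeFinset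
  refine ⟨T, hTG, hT, ?_⟩
  let A : Finset F.ConnectedComponent := {K | WonBy color blue K.supp}
  have hA : {D ∈ Set.range (SimpleGraph.ConnectedComponent.supp (G := F)) |
      WonBy color blue D}.ncard = #A := by
    rw [← Set.ncard_coe_finset, ← Set.ncard_image_of_injective _
      SimpleGraph.ConnectedComponent.supp_injective]
    congr 1
    ext D
    simp only [Set.mem_range, Set.mem_ofPred_eq, Set.mem_image, A, coe_filter, mem_univ, true_and]
    constructor
    · rintro ⟨⟨K, rfl⟩, h⟩
      exact ⟨K, h, rfl⟩
    · rintro ⟨K, h, rfl⟩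
      exact ⟨⟨K, rfl⟩, h⟩
  rw [hA] at hw
  have hAk : #A ≤ k := by
    rw [← hFk, Nat.card_eq_fintype_card]
    exact card_le_univ A
  have hb : ∀ K : F.ConnectedComponent, ∃ v ∈ K.supp, K ∈ A →
      color v = blue ∧ F.degree v < 2 * Fintype.card C := by
    intro K
    by_cases hK : K ∈ A
    · obtain ⟨v, h1, h2⟩ := exists_blue_degree_lt F hF color blue K (by simpa [A] using hK)
      exact ⟨v, h1, fun _ => h2⟩
    · obtain ⟨v, hv⟩ := K.nonempty_supp
      exact ⟨v, hv, fun h => absurd h hK⟩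
  choose b hbK hbA using hb
  have hbinj : Function.Injective b := fun K K' h => by
    rw [← (SimpleGraph.ConnectedComponent.mem_supp_iff K (b K)).1 (hbK K),
      ← (SimpleGraph.ConnectedComponent.mem_supp_iff K' (b K')).1 (hbK K'), h]
  have hsA : s ≤ #A := by nlinarith
  obtain ⟨B, hBA, hB, havg⟩ := exists_subset_sum_le (fun K => (T \ F).degree (b K)) s (#A - s) A
    (by omega)
  have hextra : ∑ K ∈ A, (T \ F).degree (b K) ≤ 2 * (k - 1) := by
    have h1 : ∑ K ∈ A, (T \ F).degree (b K) ≤ ∑ v, (T \ F).degree v := by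
      rw [← Finset.sum_image (f := fun v => (T \ F).degree v) (g := b) (s := A)
        (fun x _ y _ h => hbinj h)]
      exact Finset.sum_le_sum_of_subset (subset_univ _)
    have h2 : ∑ v, (T \ F).degree v = 2 * #(T \ F).edgeFinset := by
      convert (T \ F).sum_degrees_eq_twice_card_edges
    have h3 : #(T \ F).edgeFinset + #F.edgeFinset = #T.edgeFinset := by
      rw [show (T \ F).edgeFinset = T.edgeFinset \ F.edgeFinset by ext; simp]
      exact card_sdiff_add_card_eq_card (SimpleGraph.edgeFinset_mono hFT)
    omega
  refine ⟨B.image b, by rw [card_image_of_injective _ hbinj, hB], ?_, ?_⟩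
  · intro v hv
    obtain ⟨K, hK, rfl⟩ := mem_image.1 hv
    exact (hbA K (hBA hK)).1
  · rw [Finset.sum_image (fun x _ y _ h => hbinj h)]
    have hdeg : ∀ v, T.degree v ≤ F.degree v + (T \ F).degree v := by
      intro v
      simp only [← SimpleGraph.card_neighborFinset_eq_degree]
      refine (card_le_card ?_).trans (card_union_le _ _)
      intro u hu
      simp only [mem_union, SimpleGraph.mem_neighborFinset, SimpleGraph.sdiff_adj] at hu ⊢
      tauto
    have hforest : ∑ K ∈ B, F.degree (b K) + s ≤ s * (2 * Fintype.card C) := by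
      have := Finset.sum_le_card_nsmul B (fun K => F.degree (b K) + 1) (2 * Fintype.card C)
        fun K hK => (hbA K (hBA hK)).2
      simpa [Finset.sum_add_distrib, hB] using this
    have hlt := budget hs (Fintype.card_pos_iff.2 ⟨blue⟩) hw hAk hforest
      (havg.trans (Nat.mul_le_mul_left _ hextra))
    refine lt_of_le_of_lt (Finset.sum_le_sum fun K _ => hdeg (b K)) ?_
    rw [Finset.sum_add_distrib]
    exact hlt

/-- Lemma 4.2: if a finite connected graph `G`, vertex-colored by `c`
candidates with distinguished candidate `blue`, admits a partition into `k` districts in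
which blue wins at least `w` districts, then it admits a partition into `k` districts in
which at least `⌊w/(2c+2)⌋` districts are singletons consisting of a single blue vertex
(and such singleton districts are won by blue). -/
theorem stmt2 {V C : Type*} [Fintype V] [Fintype C] (G : SimpleGraph V) (hG : G.Connected)
    (color : V → C) (blue : C) (c : ℕ) (hc : Fintype.card C = c) (hc1 : 1 ≤ c)
    (k w : ℕ)
    (P : Set (Set V)) (hP : IsKPartition G k P)
    (hw : w ≤ {D ∈ P | WonBy color blue D}.ncard) :
    ∃ Q : Set (Set V), IsKPartition G k Q ∧
      w / (2 * c + 2) ≤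
        {D ∈ Q | (∃ v : V, color v = blue ∧ D = {v}) ∧ WonBy color blue D}.ncard := by
  classical
  subst hc
  rcases Nat.eq_zero_or_pos (w / (2 * Fintype.card C + 2)) with h0 | hs
  · exact ⟨P, hP, by rw [h0]; exact Nat.zero_le _⟩
  obtain ⟨T, hTG, hT, S, hScard, hSblue, hSdeg⟩ := exists_blue_set G hG color blue k _ hs P hP
    ((Nat.div_mul_le_self w _).trans hw)
  have hkV : k ≤ Fintype.card V := by
    obtain ⟨F, hFG, hF, hPF⟩ := exists_forest hP
    have h1 := card_edges_add_card_components F hF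
    have h2 : Nat.card F.ConnectedComponent = k := by
      rw [← hP.1, hPF, ← (isKPartition_components hFG).1]
    omega
  obtain ⟨Q, hQ, hSQ⟩ := exists_partition_of_isTree hT hTG S k hkV hSdeg
  refine ⟨Q, hQ, ?_⟩
  rw [← hScard, ← Set.ncard_coe_finset, ← Set.ncard_image_of_injective (S : Set V)
    (Set.singleton_injective (α := V))]
  refine Set.ncard_le_ncard ?_ (Set.toFinite _)
  rintro _ ⟨v, hv, rfl⟩
  exact ⟨hSQ v hv, ⟨v, hSblue v hv, rfl⟩, wonBy_singleton color blue (hSblue v hv)⟩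
end

section
/- Let G be a finite simple graph with vertex set V, |V| = n ≥ 1, and edge set E, and let H be the auxiliary graph. In any partition of the vertex set of H into n districts (nonempty parts each inducing a connected subgraph of H), every district that is won by blue is a singleton {b^v} for some v ∈ V. -/
lemma eq_singleton_of_no_adj {α : Type*} {H : SimpleGraph α} {D : Set α}
    (hc : (H.induce D).Connected) {x : α} (hx : x ∈ D) (h : ∀ y ∈ D, ¬ H.Adj x y) :
    D = {x} := by
  ext y
  constructor
  · intro hy
    obtain ⟨w⟩ := hc.preconnected ⟨x, hx⟩ ⟨y, hy⟩
    cases w with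
    | nil => rfl
    | cons a _ => exact absurd a (h _ (Subtype.property _))
  · rintro rfl
    exact hx

lemma exists_adj_dist_lt {α : Type*} {H : SimpleGraph α} (hc : H.Connected) {x r : α}
    (hne : x ≠ r) : ∃ y, H.Adj x y ∧ H.dist y r < H.dist x r := by
  obtain ⟨w, hw⟩ := hc.exists_walk_length_eq_dist x r
  cases w with
  | nil => exact absurd rfl hne
  | cons a p =>
    refine ⟨_, a, ?_⟩
    have := SimpleGraph.dist_le p
    rw [SimpleGraph.Walk.length_cons] at hw
    omega

section aux

variable {V : Type*} {G : SimpleGraph V} {n : ℕ}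

lemma auxGraph_adj_blue {v : V} {y : AuxV V ↥G.edgeSet n}
    (h : (auxGraph G n).Adj (AuxV.blue v) y) :
    ∃ (e : ↥G.edgeSet) (i : Fin (2 * n)), v ∈ (e : Sym2 V) ∧ y = AuxV.red e i := by
  rw [auxGraph, SimpleGraph.fromRel_adj] at h
  obtain ⟨_, ⟨w, e, i, hw, h1, h2⟩ | ⟨w, e, i, hw, h1, h2⟩⟩ := h
  · cases h1
    exact ⟨e, i, hw, h2⟩
  · cases h2

lemma auxGraph_adj_red {e : ↥G.edgeSet} {i : Fin (2 * n)} {y : AuxV V ↥G.edgeSet n}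
    (h : (auxGraph G n).Adj (AuxV.red e i) y) :
    ∃ v, v ∈ (e : Sym2 V) ∧ y = AuxV.blue v := by
  rw [auxGraph, SimpleGraph.fromRel_adj] at h
  obtain ⟨_, ⟨w, e', i', hw, h1, h2⟩ | ⟨w, e', i', hw, h1, h2⟩⟩ := h
  · cases h1
  · cases h2
    exact ⟨w, hw, h1⟩

lemma finite_auxV [Finite V] : Finite (AuxV V ↥G.edgeSet n) := by
  refine Finite.of_surjective
    (Sum.elim AuxV.blue (fun p => AuxV.red p.1 p.2) :
      V ⊕ (↥G.edgeSet × Fin (2 * n)) → AuxV V ↥G.edgeSet n) ?_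
  rintro (v | ⟨e, i⟩)
  · exact ⟨Sum.inl v, rfl⟩
  · exact ⟨Sum.inr (e, i), rfl⟩

lemma sym2_no_three {e : Sym2 V} {a b c : V} (ha : a ∈ e) (hb : b ∈ e) (hc : c ∈ e)
    (hab : a ≠ b) : c = a ∨ c = b := by
  rw [(Sym2.mem_and_mem_iff hab).1 ⟨ha, hb⟩] at hc
  exact Sym2.mem_iff.1 hc

/-- A connected set containing `r^e_i` but not both ends of `e` has at least as many red as blue
vertices, hence is not won by blue. -/
lemma ends_mem_of_wonBy [Finite V] {D : Set (AuxV V ↥G.edgeSet n)}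
    (hc : ((auxGraph G n).induce D).Connected) (hw : WonBy auxIsBlue true D)
    {e : ↥G.edgeSet} {i : Fin (2 * n)} (hr : AuxV.red e i ∈ D) {u : V}
    (hu : u ∈ (e : Sym2 V)) : AuxV.blue u ∈ D := by
  have := finite_auxV (G := G) (n := n)
  classical
  by_contra huD
  have key : ∀ x : D, auxIsBlue x.1 = true → ∃ y : D, ((auxGraph G n).induce D).Adj x y ∧
      ((auxGraph G n).induce D).dist y ⟨_, hr⟩ < ((auxGraph G n).induce D).dist x ⟨_, hr⟩ := by
    intro x hx
    refine exists_adj_dist_lt hc ?_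
    rintro rfl
    cases hx
  choose f hf1 hf2 using key
  refine absurd (hw false (by simp)) (not_lt.2 ?_)
  refine Set.ncard_le_ncard_of_injOn
    (fun x => if h : x ∈ D ∧ auxIsBlue x = true then (f ⟨x, h.1⟩ h.2).1 else x)
    ?_ ?_ (Set.toFinite _)
  · rintro (v | ⟨e', i'⟩) ⟨hxD, hx⟩
    · have ha : (auxGraph G n).Adj (AuxV.blue v) (f ⟨_, hxD⟩ hx) := hf1 ⟨_, hxD⟩ hx
      obtain ⟨e', i', _, h⟩ := auxGraph_adj_blue ha
      simp only [hxD, hx, and_self, dite_true]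
      exact ⟨Subtype.property _, by rw [h]; rfl⟩
    · cases hx
  · rintro (v | ⟨e₁, i₁⟩) ⟨hxD, hx⟩ (v' | ⟨e₂, i₂⟩) ⟨hxD', hx'⟩ heq
    · simp only [hxD, hx, hxD', hx', and_self, dite_true] at heq
      by_contra hne
      have hvv : v ≠ v' := fun h => hne (by rw [h])
      have heq' : f ⟨_, hxD⟩ hx = f ⟨_, hxD'⟩ hx' := Subtype.ext heq
      have ha : (auxGraph G n).Adj (AuxV.blue v) (f ⟨_, hxD⟩ hx) := hf1 ⟨_, hxD⟩ hx
      have ha' : (auxGraph G n).Adj (AuxV.blue v') (f ⟨_, hxD'⟩ hx') := hf1 ⟨_, hxD'⟩ hx'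
      have hd := hf2 ⟨_, hxD⟩ hx
      have hd' := hf2 ⟨_, hxD'⟩ hx'
      rw [← heq'] at ha' hd'
      generalize f ⟨_, hxD⟩ hx = c at ha ha' hd hd'
      obtain ⟨c, hcD⟩ := c
      obtain ⟨e', i', hv, rfl⟩ := auxGraph_adj_blue ha
      obtain ⟨e'', i'', hv', h⟩ := auxGraph_adj_blue ha'
      cases h
      by_cases hcr : (AuxV.red e' i' : AuxV V ↥G.edgeSet n) = AuxV.red e i
      · cases hcr
        rcases sym2_no_three hv hv' hu hvv with rfl | rfl
        · exact huD hxD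
        · exact huD hxD'
      · -- the neighbour of `c` closer to `r` would be a third end of the edge of `c`
        obtain ⟨⟨z, hzD⟩, hz, hzd⟩ := exists_adj_dist_lt hc
          (x := ⟨AuxV.red e' i', hcD⟩) (r := ⟨AuxV.red e i, hr⟩)
          (fun h => hcr (congrArg Subtype.val h))
        obtain ⟨t, ht, rfl⟩ := auxGraph_adj_red (show (auxGraph G n).Adj _ z from hz)
        rcases sym2_no_three hv hv' ht hvv with rfl | rfl
        · exact lt_asymm hd hzd
        · exact lt_asymm hd' hzd
    · cases hx'
    · cases hx
    · cases hx

end aux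

/-- first claim inside Lemma 3.1: in any partition of `H` into `n`
districts, every district won by blue is a singleton `{b^v}` for some vertex `v` of `G`. -/
theorem stmt4 {V : Type*} [Fintype V] (G : SimpleGraph V)
    (n : ℕ) (hn : Fintype.card V = n) (hn1 : 1 ≤ n)
    (P : Set (Set (AuxV V ↥G.edgeSet n)))
    (hP : IsKPartition (auxGraph G n) n P) :
    ∀ D ∈ P, WonBy auxIsBlue true D →
      ∃ v : V, D = ({AuxV.blue v} : Set (AuxV V ↥G.edgeSet n)) := by
  intro D hD hw
  have := finite_auxV (G := G) (n := n)
  obtain ⟨hcard, -, hconn, hdisj, hcov⟩ := hP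
  have hwlt := hw false (by simp)
  by_cases hred : ∃ e i, AuxV.red e i ∈ D
  · exfalso
    obtain ⟨e, i, hr⟩ := hred
    have hends := fun u hu => ends_mem_of_wonBy (hconn D hD) hw hr (u := u) hu
    have hblue : {x ∈ D | auxIsBlue x = true}.ncard ≤ n := by
      calc _ ≤ (AuxV.blue '' (Set.univ : Set V)).ncard := by
            refine Set.ncard_le_ncard ?_ (Set.toFinite _)
            rintro (v | ⟨e', i'⟩) ⟨_, hx⟩
            · exact ⟨v, trivial, rfl⟩
            · cases hx
        _ ≤ (Set.univ : Set V).ncard := Set.ncard_image_le (Set.toFinite _)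
        _ = n := by rw [Set.ncard_univ, Nat.card_eq_fintype_card, hn]
    have hT : {j : Fin (2 * n) | AuxV.red e j ∈ D}.ncard ≤
        {x ∈ D | auxIsBlue x = false}.ncard := by
      refine Set.ncard_le_ncard_of_injOn (fun j => AuxV.red e j) ?_ ?_ (Set.toFinite _)
      · intro j hj
        exact ⟨hj, rfl⟩
      · intro j _ k _ h
        cases h
        rfl
    have hS : {j : Fin (2 * n) | AuxV.red e j ∈ D}ᶜ.ncard ≤ P.ncard := by
      refine Set.ncard_le_ncard_of_injOn (fun j => {AuxV.red e j}) ?_ ?_ (Set.toFinite _)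
      · intro j hj
        obtain ⟨D', hD', hjD'⟩ : AuxV.red e j ∈ ⋃₀ P := hcov ▸ Set.mem_univ _
        have hne : D ≠ D' := by
          rintro rfl
          exact hj hjD'
        have : D' = {AuxV.red e j} := by
          refine eq_singleton_of_no_adj (hconn D' hD') hjD' ?_
          intro y hy ha
          obtain ⟨v, hv, rfl⟩ := auxGraph_adj_red ha
          exact Set.disjoint_left.1 (hdisj hD hD' hne) (hends v hv) hy
        exact this ▸ hD'
      · intro j _ k _ h
        cases Set.singleton_injective h
        rfl
    have hadd := Set.ncard_add_ncard_compl {j : Fin (2 * n) | AuxV.red e j ∈ D}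
    rw [Nat.card_fin] at hadd
    omega
  · obtain ⟨x, hxD, hx⟩ := Set.nonempty_of_ncard_ne_zero (Nat.ne_zero_of_lt hwlt)
    rcases x with v | ⟨e, i⟩
    · refine ⟨v, eq_singleton_of_no_adj (hconn D hD) hxD ?_⟩
      intro y hy ha
      obtain ⟨e, i, _, rfl⟩ := auxGraph_adj_blue ha
      exact hred ⟨e, i, hy⟩
    · cases hx
end

section
/- Let G be a finite connected simple graph with vertex set V, |V| = n ≥ 2, and edge set E, |E| = m, let l ≥ 2 be an integer, and let H be the auxiliary graph. Consider any partition of the vertex set of H into n districts (nonempty parts each inducing a connected subgraph of H), and suppose W is a district won by blue. Then b^e ∈ W for every edge e ∈ E. -/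
instance CVert.finite {V E : Type*} [Finite V] [Finite E] (n m l : ℕ) :
    Finite (CVert V E n m l) := by
  let f : (V ⊕ (V × Fin (n * m * (m + 1)))) ⊕ (E ⊕ (E × Fin (n * l * (m + 1)))) ⊕
      (E × Fin (n * l * (m + 1)) × Fin m) → CVert V E n m l
    | .inl (.inl v) => .w v
    | .inl (.inr (v, i)) => .r v i
    | .inr (.inl (.inl e)) => .b e
    | .inr (.inl (.inr (e, i))) => .b' e i
    | .inr (.inr (e, i, j)) => .c e i j
  refine Finite.of_surjective f ?_
  rintro (v | ⟨v, i⟩ | e | ⟨e, i⟩ | ⟨e, i, j⟩)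
  · exact ⟨.inl (.inl v), rfl⟩
  · exact ⟨.inl (.inr (v, i)), rfl⟩
  · exact ⟨.inr (.inl (.inl e)), rfl⟩
  · exact ⟨.inr (.inl (.inr (e, i))), rfl⟩
  · exact ⟨.inr (.inr (e, i, j)), rfl⟩

/-- A connected set that meets both `S` and its complement contains an edge leaving `S`. -/
lemma exists_boundary_edge {α : Type*} {H : SimpleGraph α} {D : Set α}
    (hD : (H.induce D).Connected) (S : Set α) {x y : α} (hx : x ∈ D) (hxS : x ∈ S)
    (hy : y ∈ D) (hyS : y ∉ S) :
    ∃ a b, a ∈ D ∧ b ∈ D ∧ a ∈ S ∧ b ∉ S ∧ H.Adj a b := by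
  obtain ⟨p⟩ := hD.preconnected ⟨x, hx⟩ ⟨y, hy⟩
  obtain ⟨d, -, h1, h2⟩ := p.exists_boundary_dart (Subtype.val ⁻¹' S) hxS hyS
  exact ⟨d.fst, d.snd, d.fst.2, d.snd.2, h1, h2, d.adj⟩

/-- The pendant star at `b^e` with index `i`: the vertex `b'^e_i` together with its leaves. -/
def pendant {V E : Type*} {n m l : ℕ} (e : E) (i : Fin (n * l * (m + 1))) :
    Set (CVert V E n m l) :=
  {x | x = .b' e i ∨ ∃ j, x = .c e i j}

section

variable {V : Type*} {G : SimpleGraph V} {n m l : ℕ} {D : Set (CVert V ↥G.edgeSet n m l)}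

lemma pendant_subset_or_mem (hD : ((cGraph G n m l).induce D).Connected) {e : ↥G.edgeSet}
    {i : Fin (n * l * (m + 1))} {x : CVert V ↥G.edgeSet n m l} (hx : x ∈ D)
    (hxS : x ∈ pendant e i) : D ⊆ pendant e i ∨ CVert.b e ∈ D := by
  by_contra! h
  obtain ⟨h, hb⟩ := h
  obtain ⟨y, hy, hyS⟩ := Set.not_subset.1 h
  obtain ⟨a, b, ha, hbD, haS, hbS, hab⟩ := exists_boundary_edge hD _ hx hxS hy hyS
  simp only [cGraph, SimpleGraph.fromRel_adj] at hab
  simp only [pendant, Set.mem_ofPred_eq] at haS hbS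
  grind

lemma leaf_subset_or_mem (hD : ((cGraph G n m l).induce D).Connected) {e : ↥G.edgeSet}
    {i : Fin (n * l * (m + 1))} {j : Fin m} (hx : CVert.c e i j ∈ D) :
    D ⊆ {CVert.c e i j} ∨ CVert.b' e i ∈ D := by
  by_contra! h
  obtain ⟨h, hb⟩ := h
  obtain ⟨y, hy, hyS⟩ := Set.not_subset.1 h
  obtain ⟨a, b, ha, hbD, haS, hbS, hab⟩ := exists_boundary_edge hD {CVert.c e i j} hx rfl hy hyS
  simp only [cGraph, SimpleGraph.fromRel_adj] at hab
  simp only [Set.mem_singleton_iff] at haS hbS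
  grind

end

/-- The district containing a given vertex, as a function. -/
lemma IsKPartition.exists_district {α : Type*} {H : SimpleGraph α} {k : ℕ} {P : Set (Set α)}
    (hP : IsKPartition H k P) :
    ∃ d : α → Set α, (∀ x, d x ∈ P) ∧ (∀ x, x ∈ d x) ∧ ∀ D ∈ P, ∀ x ∈ D, d x = D := by
  obtain ⟨-, -, -, hdisj, hcov⟩ := hP
  have h : ∀ x, ∃ D ∈ P, x ∈ D := fun x => by
    have : x ∈ ⋃₀ P := hcov ▸ Set.mem_univ x
    exact this
  choose d hd hxd using h
  refine ⟨d, hd, hxd, fun D hD x hx => ?_⟩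
  by_contra hne
  exact Set.disjoint_left.1 (hdisj (hd x) hD hne) (hxd x) hx

/-- The upper bound for the blue vertices is below the lower bound for those of color `C^e`. -/
lemma blue_count_lt {n m N : ℕ} (hn : 1 ≤ n) (hm : 1 ≤ m) (hN : n * (m + 1) ≤ N) :
    (m - 1) * (N + 1) < (N - (n - 1)) * m := by
  obtain ⟨k, rfl⟩ := Nat.exists_eq_add_of_le' hm
  obtain ⟨q, rfl⟩ := Nat.exists_eq_add_of_le' hn
  obtain ⟨M, rfl⟩ := Nat.exists_eq_add_of_le' (show q ≤ N by nlinarith)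
  simp only [Nat.add_sub_cancel]
  nlinarith

/-- A district won by blue contains at least one of the vertices `b^e`. -/
lemma exists_b_mem_s5 {V : Type*} [Fintype V] (G : SimpleGraph V) (hG : G.Connected)
    (n m : ℕ) (hn : Fintype.card V = n) (hn2 : 2 ≤ n)
    (hm : G.edgeSet.ncard = m) (l : ℕ)
    (P : Set (Set (CVert V ↥G.edgeSet n m l)))
    (hP : IsKPartition (cGraph G n m l) n P)
    (W : Set (CVert V ↥G.edgeSet n m l)) (hW : W ∈ P)
    (hwin : WonBy cColor CColor.blue W) :
    ∃ e : ↥G.edgeSet, CVert.b e ∈ W := by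
  by_contra! hno
  obtain ⟨d, hdP, hxd, hd⟩ := hP.exists_district
  obtain ⟨hcard, -, hconn, -, -⟩ := hP
  have hPfin : P.Finite := Set.finite_of_ncard_pos (by omega)
  have hpos := hwin .red (by simp)
  obtain ⟨x, hxW, hx⟩ := Set.nonempty_of_ncard_ne_zero (Nat.ne_zero_of_lt hpos)
  obtain ⟨f, i, rfl⟩ : ∃ f i, x = .b' f i := by
    rcases x with v | ⟨v, i⟩ | e | ⟨e, i⟩ | ⟨e, i, j⟩ <;> simp [cColor] at hx
    · exact absurd hxW (hno e)
    · exact ⟨e, i, rfl⟩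
  have hsub : W ⊆ pendant f i :=
    (pendant_subset_or_mem (hconn W hW) hxW (Or.inl rfl)).resolve_right (hno f)
  have hblue : {x ∈ W | cColor x = CColor.blue}.ncard ≤ 1 := by
    rw [← Set.ncard_singleton (CVert.b' f i : CVert V ↥G.edgeSet n m l)]
    refine Set.ncard_le_ncard ?_ (Set.finite_singleton _)
    rintro y ⟨hy, hyb⟩
    obtain rfl | ⟨j, rfl⟩ := hsub hy
    · rfl
    · simp [cColor] at hyb
  have hce : {x ∈ W | cColor x = CColor.ce f} = ∅ := by
    rw [← Set.ncard_eq_zero (Set.toFinite _)]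
    have := hwin (.ce f) (by simp)
    omega
  have hleaf : ∀ j, d (.c f i j) ⊆ {CVert.c f i j} := fun j => by
    refine (leaf_subset_or_mem (hconn _ (hdP _)) (hxd _)).resolve_right fun hb => ?_
    have h1 : CVert.c f i j ∈ W := by
      rw [← hd W hW _ hxW, hd _ (hdP _) _ hb]
      exact hxd _
    have h2 : CVert.c f i j ∈ {x ∈ W | cColor x = CColor.ce f} := ⟨h1, rfl⟩
    simp [hce] at h2
  obtain ⟨v⟩ := hG.nonempty
  have hdW : d (.b' f i) = W := hd W hW _ hxW
  -- the districts of `b'^f_i`, of `w^v` and of the `m` leaves at `b'^f_i` are pairwise distinct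
  let g : Option (Option (Fin m)) → CVert V ↥G.edgeSet n m l
    | none => .b' f i
    | some none => .w v
    | some (some j) => .c f i j
  have hwW : CVert.w v ∉ W := fun h => by simpa [pendant] using hsub h
  have key : ∀ j y, d (.c f i j) = d y → y = .c f i j := fun j y h => hleaf j (h ▸ hxd y)
  have hinj : Function.Injective fun o => (⟨d (g o), hdP _⟩ : P) := by
    intro o₁ o₂ h
    have h : d (g o₁) = d (g o₂) := congrArg Subtype.val h
    rcases o₁ with _ | _ | j₁ <;> rcases o₂ with _ | _ | j₂ <;> simp only [g] at h
    · rfl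
    · exact absurd (by rw [← hdW, h]; exact hxd _) hwW
    · exact absurd (key _ _ h.symm) (by simp)
    · exact absurd (by rw [← hdW, ← h]; exact hxd _) hwW
    · rfl
    · exact absurd (key _ _ h.symm) (by simp)
    · exact absurd (key _ _ h) (by simp)
    · exact absurd (key _ _ h) (by simp)
    · have := key _ _ h
      simp only [CVert.c.injEq, true_and] at this
      rw [this]
  have := hPfin.to_subtype
  have h1 := Nat.card_le_card_of_injective _ hinj
  have h2 := hG.card_vert_le_card_edgeSet_add_one
  simp only [Nat.card_coe_set_eq, Nat.card_eq_fintype_card, Fintype.card_option,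
    Fintype.card_fin] at h1 h2
  omega

/-- intermediate claim inside Theorem 3.3: in any partition of `H`
into `n` districts, a district `W` won by blue contains `b^e` for every edge `e` of `G`. -/
theorem stmt5 {V : Type*} [Fintype V] (G : SimpleGraph V) (hG : G.Connected)
    (n m : ℕ) (hn : Fintype.card V = n) (hn2 : 2 ≤ n)
    (hm : G.edgeSet.ncard = m)
    (l : ℕ) (hl : 2 ≤ l)
    (P : Set (Set (CVert V ↥G.edgeSet n m l)))
    (hP : IsKPartition (cGraph G n m l) n P)
    (W : Set (CVert V ↥G.edgeSet n m l)) (hW : W ∈ P)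
    (hwin : WonBy cColor CColor.blue W) :
    ∀ e : ↥G.edgeSet, CVert.b e ∈ W := by
  obtain ⟨e, he⟩ := exists_b_mem_s5 G hG n m hn hn2 hm l P hP W hW hwin
  intro f
  by_contra hf
  obtain ⟨d, hdP, hxd, hd⟩ := hP.exists_district
  obtain ⟨hcard, -, hconn, -, -⟩ := hP
  have hPfin : P.Finite := Set.finite_of_ncard_pos (by omega)
  -- the indices of the stars of `e` that are not contained in `W`
  let B : Set (Fin (n * l * (m + 1))) := {i | ∃ x ∈ pendant e i, x ∉ W}
  have hB : B.ncard ≤ n - 1 := by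
    have : Nonempty (CVert V ↥G.edgeSet n m l) := ⟨.b e⟩
    have hBx : ∀ i ∈ B, ∃ x ∈ pendant e i, x ∉ W := fun i hi => hi
    choose! x hx hxW using hBx
    have hdx : ∀ i ∈ B, d (x i) ⊆ pendant e i := fun i hi => by
      refine (pendant_subset_or_mem (hconn _ (hdP _)) (hxd _) (hx i hi)).resolve_right fun hb => ?_
      apply hxW i hi
      rw [← hd W hW _ he, hd _ (hdP _) _ hb]
      exact hxd _
    have hPW : (P \ {W}).ncard = n - 1 := by rw [Set.ncard_sdiff_singleton_of_mem hW, hcard]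
    refine le_of_le_of_eq ?_ hPW
    refine Set.ncard_le_ncard_of_injOn (fun i => d (x i)) ?_ ?_ (hPfin.subset Set.sdiff_subset)
    · intro i hi
      exact ⟨hdP _, fun h => hxW i hi (h ▸ hxd _)⟩
    · intro i hi j hj (hij : d (x i) = d (x j))
      have h1 : x i ∈ pendant e j := hdx j hj (hij ▸ hxd _)
      have h2 := hx i hi
      simp only [pendant, Set.mem_ofPred_eq] at h1 h2
      grind
  have hce : (n * l * (m + 1) - (n - 1)) * m ≤ {x ∈ W | cColor x = CColor.ce e}.ncard := by
    have h1 : (Bᶜ ×ˢ (Set.univ : Set (Fin m))).ncard ≤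
        {x ∈ W | cColor x = CColor.ce e}.ncard := by
      refine Set.ncard_le_ncard_of_injOn (fun p => CVert.c e p.1 p.2) ?_ ?_ (Set.toFinite _)
      · rintro ⟨i, j⟩ ⟨hi, -⟩
        refine ⟨?_, rfl⟩
        by_contra h
        exact hi ⟨_, Or.inr ⟨j, rfl⟩, h⟩
      · rintro ⟨i, j⟩ - ⟨i₂, j₂⟩ - h
        simpa using h
    rw [Set.ncard_prod, Set.ncard_univ, Set.ncard_compl, Nat.card_fin, Nat.card_fin] at h1
    exact (Nat.mul_le_mul_right _ (by omega)).trans h1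
  have hblue : {x ∈ W | cColor x = CColor.blue}.ncard ≤ (m - 1) * (n * l * (m + 1) + 1) := by
    let g : ↥G.edgeSet × Option (Fin (n * l * (m + 1))) → CVert V ↥G.edgeSet n m l
      | (a, none) => .b a
      | (a, some i) => .b' a i
    have hsub : {x ∈ W | cColor x = CColor.blue} ⊆
        g '' (({f}ᶜ : Set ↥G.edgeSet) ×ˢ Set.univ) := by
      rintro y ⟨hy, hyb⟩
      rcases y with v | ⟨v, i⟩ | a | ⟨a, i⟩ | ⟨a, i, j⟩ <;> simp [cColor] at hyb
      · refine ⟨(a, none), ⟨?_, trivial⟩, rfl⟩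
        rintro rfl
        exact hf hy
      · refine ⟨(a, some i), ⟨?_, trivial⟩, rfl⟩
        rintro rfl
        -- `W` contains `b^e`, which is outside every star, so it cannot lie inside a star of `f`
        refine hf ((pendant_subset_or_mem (hconn W hW) hy (Or.inl rfl)).resolve_left fun h => ?_)
        simpa [pendant] using h he
    have h1 := (Set.ncard_le_ncard hsub (Set.toFinite _)).trans (Set.ncard_image_le (Set.toFinite _))
    rw [Set.ncard_prod, Set.ncard_univ, Set.ncard_compl, Set.ncard_singleton,
      Nat.card_coe_set_eq, hm] at h1
    simpa using h1
  have hlt := hwin (.ce e) (by simp)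
  have hmpos : 1 ≤ m := by
    rw [← hm]
    exact (Set.ncard_pos (Set.toFinite _)).2 ⟨e, e.2⟩
  have hN : n * (m + 1) ≤ n * l * (m + 1) := by
    gcongr
    exact Nat.le_mul_of_pos_right _ (by omega)
  exact absurd (hlt.trans_le hblue) (blue_count_lt (by omega) hmpos hN |>.le.trans hce).not_gt
end

section
/- Let G be a finite connected simple graph with vertex set V, |V| = n ≥ 2, and edge set E, |E| = m, let l ≥ 2 be an integer, and let H be the auxiliary graph. Consider any partition of the vertex set of H into n districts (nonempty parts each inducing a connected subgraph of H), and suppose W is a district won by blue. Then the set V^W := {v ∈ V : w^v ∈ W} has cardinality at most l. -/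
lemma adj_r {V : Type*} {G : SimpleGraph V} {n m l : ℕ} {v : V} {i : Fin (n * m * (m + 1))}
    {y : CVert V ↥G.edgeSet n m l} (h : (cGraph G n m l).Adj (CVert.r v i) y) :
    y = CVert.w v := by
  simp only [cGraph, SimpleGraph.fromRel_adj] at h
  grind

/-- A connected set containing a red leaf but not its neighbor consists of that leaf alone. -/
lemma district_eq_singleton {V : Type*} {G : SimpleGraph V} {n m l : ℕ}
    {D : Set (CVert V ↥G.edgeSet n m l)} (hD : ((cGraph G n m l).induce D).Connected)
    {v : V} {i : Fin (n * m * (m + 1))} (hr : CVert.r v i ∈ D) (hw : CVert.w v ∉ D) :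
    D = {CVert.r v i} := by
  refine Set.eq_singleton_iff_unique_mem.2 ⟨hr, fun y hy => ?_⟩
  obtain ⟨p⟩ := hD.preconnected ⟨_, hr⟩ ⟨y, hy⟩
  cases p with
  | nil => rfl
  | @cons _ z _ h _ => exact absurd (adj_r h ▸ z.2) hw

lemma blue_count {V : Type*} [Finite V] (G : SimpleGraph V) (n m l : ℕ)
    (hm : G.edgeSet.ncard = m) (W : Set (CVert V ↥G.edgeSet n m l)) :
    {x ∈ W | cColor x = CColor.blue}.ncard ≤ m + m * (n * l * (m + 1)) := by
  have hsub : {x ∈ W | cColor x = CColor.blue} ⊆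
      Set.range (CVert.b : ↥G.edgeSet → CVert V ↥G.edgeSet n m l) ∪
      Set.range (fun p : ↥G.edgeSet × Fin (n * l * (m + 1)) =>
        (CVert.b' p.1 p.2 : CVert V ↥G.edgeSet n m l)) := by
    rintro (v | ⟨v, i⟩ | e | ⟨e, i⟩ | ⟨e, i, j⟩) ⟨-, hx⟩ <;> simp_all [cColor]
  refine (Set.ncard_le_ncard hsub ((Set.finite_range _).union (Set.finite_range _))).trans
    ((Set.ncard_union_le _ _).trans (Nat.add_le_add ?_ ?_))
  · rw [← Nat.card_coe_set_eq, ← hm, ← Nat.card_coe_set_eq]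
    exact Finite.card_range_le _
  · rw [← Nat.card_coe_set_eq]
    refine (Finite.card_range_le _).trans ?_
    rw [Nat.card_prod, Nat.card_fin, Nat.card_coe_set_eq, hm]

/-- All but at most `n` of the red leaves attached to `V^W` lie in `W`, since the leaves outside `W`
inject into the districts as singletons. -/
lemma red_count {V : Type*} [Finite V] (G : SimpleGraph V) (n m l : ℕ) (hn : n ≠ 0)
    (P : Set (Set (CVert V ↥G.edgeSet n m l)))
    (hP : IsKPartition (cGraph G n m l) n P)
    (W : Set (CVert V ↥G.edgeSet n m l)) (hW : W ∈ P) :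
    {v : V | CVert.w v ∈ W}.ncard * (n * m * (m + 1)) ≤
      {x ∈ W | cColor x = CColor.red}.ncard + n := by
  obtain ⟨hcard, -, hconn, hdisj, hcov⟩ := hP
  have hPfin : P.Finite := Set.finite_of_ncard_ne_zero (by rwa [hcard])
  let f : V × Fin (n * m * (m + 1)) → CVert V ↥G.edgeSet n m l := fun p => CVert.r p.1 p.2
  have hf : Function.Injective f := by
    rintro ⟨v, i⟩ ⟨u, j⟩ h
    simpa [f] using h
  let A := f '' ({v : V | CVert.w v ∈ W} ×ˢ Set.univ)
  have hA : A.ncard = {v : V | CVert.w v ∈ W}.ncard * (n * m * (m + 1)) := by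
    rw [Set.ncard_image_of_injective _ hf, Set.ncard_prod, Set.ncard_univ, Nat.card_fin]
  have hAfin : A.Finite := Set.toFinite _
  have hredfin : {x ∈ W | cColor x = CColor.red}.Finite := by
    refine (Set.finite_range f).subset ?_
    rintro (v | ⟨v, i⟩ | e | ⟨e, i⟩ | ⟨e, i, j⟩) ⟨-, hx⟩ <;> simp_all [cColor, f]
  have hin : (A ∩ W).ncard ≤ {x ∈ W | cColor x = CColor.red}.ncard := by
    refine Set.ncard_le_ncard ?_ hredfin
    rintro _ ⟨⟨p, -, rfl⟩, hx⟩
    exact ⟨hx, rfl⟩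
  have hout : (A \ W).ncard ≤ n := by
    refine le_of_le_of_eq ?_ hcard
    refine Set.ncard_le_ncard_of_injOn (fun x => {x}) ?_
      (fun _ _ _ _ h => Set.singleton_injective h) hPfin
    rintro _ ⟨⟨⟨v, i⟩, ⟨hv, -⟩, rfl⟩, hx⟩
    obtain ⟨D, hDP, hD⟩ := Set.mem_sUnion.1 (hcov ▸ Set.mem_univ (f (v, i)))
    have hne : D ≠ W := by
      rintro rfl
      exact hx hD
    have hw : CVert.w v ∉ D := fun h => Set.disjoint_left.1 (hdisj hDP hW hne) h hv
    have hDs := district_eq_singleton (hconn D hDP) hD hw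
    exact hDs ▸ hDP
  have hsplit := Set.ncard_inter_add_ncard_sdiff_eq_ncard A W hAfin
  omega

/-- intermediate claim inside Theorem 3.3: in any partition of `H`
into `n` districts, if `W` is a district won by blue then the set
`V^W = {v ∈ V : w^v ∈ W}` has at most `l` elements. -/
theorem stmt6 {V : Type*} [Fintype V] (G : SimpleGraph V) (hG : G.Connected)
    (n m : ℕ) (hn : Fintype.card V = n) (hn2 : 2 ≤ n)
    (hm : G.edgeSet.ncard = m)
    (l : ℕ) (hl : 2 ≤ l)
    (P : Set (Set (CVert V ↥G.edgeSet n m l)))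
    (hP : IsKPartition (cGraph G n m l) n P)
    (W : Set (CVert V ↥G.edgeSet n m l)) (hW : W ∈ P)
    (hwin : WonBy cColor CColor.blue W) :
    {v : V | CVert.w v ∈ W}.ncard ≤ l := by
  by_contra! hcon
  have hred := red_count G n m l (by omega) P hP W hW
  have hblue := blue_count G n m l hm W
  have hlt := hwin CColor.red (by simp)
  have hbig := Nat.mul_le_mul_right (n * m * (m + 1)) (Nat.succ_le_of_lt hcon)
  -- Without edges there are no blue vertices at all, and the win is already impossible.
  rcases Nat.eq_zero_or_pos m with h0 | hpos
  · have hzero : m + m * (n * l * (m + 1)) = 0 := by simp [h0]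
    omega
  · nlinarith [Nat.mul_le_mul hn2 hpos, Nat.mul_le_mul_left n hpos,
      Nat.mul_le_mul_right m hn2, Nat.mul_le_mul_left (n * m) hpos]
end

section
/- Let G be a finite connected simple graph with vertex set V, |V| = n ≥ 2, and edge set E, |E| = m, let l be a positive integer, and let H be the auxiliary graph. If W is a subset of the vertices of H that induces a connected subgraph of H and the set V^W := {v ∈ V : w^v ∈ W} is nonempty, then V^W induces a connected subgraph of G. -/
/-- `anchor x v` says that `v` is an anchor of the vertex `x` of `H`: the vertex of `G` carrying `x`
if `x` is white or red, or an endpoint of the edge of `G` carrying `x` otherwise. -/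
def anchor {V : Type*} {G : SimpleGraph V} {n m l : ℕ} :
    CVert V ↥G.edgeSet n m l → V → Prop
  | CVert.w u, v => v = u
  | CVert.r u _, v => v = u
  | CVert.b e, v => v ∈ (e : Sym2 V)
  | CVert.b' e _, v => v ∈ (e : Sym2 V)
  | CVert.c e _ _, v => v ∈ (e : Sym2 V)

/-- An anchor of `y` is either an anchor of its neighbour `x`, or is `G`-adjacent to `v` where
`x = w^v`. -/
theorem anchor_step {V : Type*} {G : SimpleGraph V} {n m l : ℕ}
    {x y : CVert V ↥G.edgeSet n m l} (h : (cGraph G n m l).Adj x y) {t : V} (ht : anchor y t) :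
    anchor x t ∨ ∃ v, x = CVert.w v ∧ G.Adj v t := by
  rw [cGraph, SimpleGraph.fromRel_adj] at h
  obtain ⟨-, h | h⟩ := h
  · rcases h with ⟨v, i, rfl, rfl⟩ | ⟨v, e, hv, rfl, rfl⟩ | ⟨e, i, rfl, rfl⟩ | ⟨e, i, j, rfl, rfl⟩
    · exact Or.inl ht
    · by_cases htv : t = v
      · exact Or.inl htv
      · refine Or.inr ⟨v, rfl, ?_⟩
        have he : (e : Sym2 V) = s(v, t) :=
          (Sym2.mem_and_mem_iff (Ne.symm htv)).1 ⟨hv, ht⟩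
        rw [← SimpleGraph.mem_edgeSet, ← he]
        exact e.2
    · exact Or.inl ht
    · exact Or.inl ht
  · rcases h with ⟨v, i, rfl, rfl⟩ | ⟨v, e, hv, rfl, rfl⟩ | ⟨e, i, rfl, rfl⟩ | ⟨e, i, j, rfl, rfl⟩
    · exact Or.inl ht
    · obtain rfl : t = v := ht
      exact Or.inl hv
    · exact Or.inl ht
    · exact Or.inl ht

/-- Reachability of all anchors in `V^W` is preserved along walks inside `W`. -/
theorem anchor_walk {V : Type*} {G : SimpleGraph V} {n m l : ℕ}
    {W : Set (CVert V ↥G.edgeSet n m l)} (u : {v : V | CVert.w v ∈ W}) {x y : W}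
    (p : ((cGraph G n m l).induce W).Walk x y)
    (hx : ∀ t : {v : V | CVert.w v ∈ W}, anchor x.1 t.1 →
      (G.induce {v : V | CVert.w v ∈ W}).Reachable u t) :
    ∀ t : {v : V | CVert.w v ∈ W}, anchor y.1 t.1 →
      (G.induce {v : V | CVert.w v ∈ W}).Reachable u t := by
  induction p with
  | nil => exact hx
  | @cons a b _ h p ih =>
    refine ih fun t ht => ?_
    rcases anchor_step (SimpleGraph.induce_adj.1 h) ht with h' | ⟨v, hv, hvt⟩
    · exact hx t h'
    · have hvW : CVert.w v ∈ W := hv ▸ a.2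
      have hr := hx ⟨v, hvW⟩ (by rw [hv]; rfl)
      exact hr.trans (SimpleGraph.Adj.reachable (SimpleGraph.induce_adj.2 hvt))

/-- connectivity transfer inside Theorem 3.3: if `W` is a set of
vertices of `H` inducing a connected subgraph of `H` and `V^W = {v ∈ V : w^v ∈ W}` is
nonempty, then `V^W` induces a connected subgraph of `G`. -/
theorem stmt8 {V : Type*} [Fintype V] (G : SimpleGraph V) (hG : G.Connected)
    (n m : ℕ) (hn : Fintype.card V = n) (hn2 : 2 ≤ n)
    (hm : G.edgeSet.ncard = m)
    (l : ℕ) (hl : 0 < l)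
    (W : Set (CVert V ↥G.edgeSet n m l))
    (hWconn : ((cGraph G n m l).induce W).Connected)
    (hne : {v : V | CVert.w v ∈ W}.Nonempty) :
    (G.induce {v : V | CVert.w v ∈ W}).Connected := by
  haveI := hne.to_subtype
  refine ⟨fun u v => ?_⟩
  obtain ⟨p⟩ := hWconn.preconnected ⟨CVert.w u.1, u.2⟩ ⟨CVert.w v.1, v.2⟩
  refine anchor_walk u p (fun t ht => ?_) v rfl
  obtain rfl : t = u := Subtype.ext ht
  exact SimpleGraph.Reachable.refl _
end

section
/- Let G be a finite connected simple graph, let T be a spanning tree of G, and let S be any set of vertices of G. Then the number of connected components of the subgraph of G induced on V(G) ∖ S, plus |S|, is at most 1 plus the sum over v ∈ S of the degree of v in T. -/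
/-!
Contract every connected component of `G - S` to a point. The image of `T` under this
contraction is a connected graph `H` whose vertices are the components of `G - S` together with
the elements of `S`. An edge of `T` avoiding `S` lies inside one component and is contracted, so
every edge of `H` comes from a pair `(v, w)` with `v ∈ S` and `w` a `T`-neighbour of `v`.
Hence `H` has at most `∑ v ∈ S, deg_T v` edges, and a connected graph has at most one
more vertex than it has edges.
-/

open Classical in
/-- The contraction map: vertices of `S` are kept, other vertices go to their component in
`G - S`. -/
noncomputable def contractCompl {V : Type*} (G : SimpleGraph V) (S : Set V) (v : V) :
    (G.induce Sᶜ).ConnectedComponent ⊕ S :=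
  if h : v ∈ S then Sum.inr ⟨v, h⟩ else Sum.inl ((G.induce Sᶜ).connectedComponentMk ⟨v, h⟩)

theorem contractCompl_surjective {V : Type*} (G : SimpleGraph V) (S : Set V) :
    Function.Surjective (contractCompl G S) := by
  rintro (c | ⟨v, hv⟩)
  · induction c using SimpleGraph.ConnectedComponent.ind with
    | _ v =>
      obtain ⟨v, hv⟩ := v
      have hv' : v ∉ S := hv
      exact ⟨v, by simp [contractCompl, hv']⟩
  · exact ⟨v, by simp [contractCompl, hv]⟩

theorem contractCompl_eq_of_adj {V : Type*} {G : SimpleGraph V} {S : Set V} {u v : V}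
    (h : G.Adj u v) (hu : u ∉ S) (hv : v ∉ S) : contractCompl G S u = contractCompl G S v := by
  have hadj : (G.induce Sᶜ).Adj ⟨u, hu⟩ ⟨v, hv⟩ := h
  simp only [contractCompl, hu, hv, dite_false]
  exact congrArg Sum.inl (SimpleGraph.ConnectedComponent.sound hadj.reachable)

/-- The image of a connected graph under a surjection, with loops removed, is connected. -/
theorem connected_fromRel_of_surjective {V W : Type*} {T : SimpleGraph V} (hT : T.Connected)
    {f : V → W} (hf : Function.Surjective f) :
    (SimpleGraph.fromRel fun a b => ∃ u v, T.Adj u v ∧ f u = a ∧ f v = b).Connected := by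
  have key : ∀ u v, T.Walk u v → (SimpleGraph.fromRel fun a b =>
      ∃ u v, T.Adj u v ∧ f u = a ∧ f v = b).Reachable (f u) (f v) := by
    intro u v p
    induction p with
    | nil => exact SimpleGraph.Reachable.refl _
    | @cons u v w h p ih =>
      by_cases he : f u = f v
      · rw [he]; exact ih
      · refine SimpleGraph.Reachable.trans (SimpleGraph.Adj.reachable ?_) ih
        exact ⟨he, Or.inl ⟨u, v, h, rfl, rfl⟩⟩
  have : Nonempty W := hT.nonempty.map f
  refine SimpleGraph.Connected.mk fun a b => ?_
  obtain ⟨u, rfl⟩ := hf a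
  obtain ⟨v, rfl⟩ := hf b
  obtain ⟨p⟩ := hT.preconnected u v
  exact key u v p

/-- spanning-tree component bound from Lemmas 4.2 and 4.6: for a
spanning tree `T` of a finite connected graph `G` and any vertex set `S`, the number of
connected components of the subgraph of `G` induced on the complement of `S`, plus `|S|`,
is at most `1` plus the sum over `v ∈ S` of the degree of `v` in `T`. -/
theorem stmt10 {V : Type*} [Fintype V] (G : SimpleGraph V) (hG : G.Connected)
    (T : SimpleGraph V) (hTG : T ≤ G) (hT : T.IsTree) (S : Set V) :
    Nat.card (G.induce Sᶜ).ConnectedComponent + S.ncard ≤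
      1 + ∑ᶠ v ∈ S, (T.neighborSet v).ncard := by
  classical
  have hconn := connected_fromRel_of_surjective hT.connected (contractCompl_surjective G S)
  have hcard := hconn.card_vert_le_card_edgeSet_add_one
  rw [Nat.card_sum, Nat.card_coe_set_eq S] at hcard
  have hedge : (SimpleGraph.fromRel fun a b => ∃ u v, T.Adj u v ∧
      contractCompl G S u = a ∧ contractCompl G S v = b).edgeSet ⊆
      Set.range (fun x : (Σ v : S, T.neighborSet v) =>
        s(contractCompl G S x.1, contractCompl G S x.2)) := by
    have aux : ∀ u v, T.Adj u v → contractCompl G S u ≠ contractCompl G S v →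
        s(contractCompl G S u, contractCompl G S v) ∈
        Set.range (fun x : (Σ v : S, T.neighborSet v) =>
          s(contractCompl G S x.1, contractCompl G S x.2)) := by
      intro u v h hne
      by_cases hu : u ∈ S
      · exact ⟨⟨⟨u, hu⟩, ⟨v, h⟩⟩, rfl⟩
      · by_cases hv : v ∈ S
        · exact ⟨⟨⟨v, hv⟩, ⟨u, h.symm⟩⟩, Sym2.eq_swap⟩
        · exact absurd (contractCompl_eq_of_adj (hTG h) hu hv) hne
    intro e
    induction e using Sym2.ind with
    | _ a b =>
      rintro ⟨hne, ⟨u, v, h, rfl, rfl⟩ | ⟨u, v, h, rfl, rfl⟩⟩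
      · exact aux u v h hne
      · rw [Sym2.eq_swap]; exact aux u v h hne.symm
  have hle := (Set.ncard_le_ncard hedge (Set.finite_range _)).trans
    (Finite.card_range_le _)
  rw [Nat.card_sigma] at hle
  have hsum : ∑ᶠ v ∈ S, (T.neighborSet v).ncard = ∑ v : S, Nat.card (T.neighborSet v) := by
    rw [← finsum_set_coe_eq_finsum_mem, finsum_eq_sum_of_fintype]
    rfl
  rw [← hsum] at hle
  rw [Nat.card_coe_set_eq] at hcard
  omega
end

section
/- Let G be a finite connected simple graph, let d ≥ 1 be an integer, let B be a set of vertices of G each of degree at most d in G, and let k be a positive integer. Then there exists a subset B* ⊆ B such that |B*| plus the number of connected components of the subgraph of G induced on V(G) ∖ B* is at most k, and |B*| ≥ min(|B|, ⌊(k−1)/d⌋). -/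
/-!
Every set `S` of vertices of degree at most `d` in a connected graph `G` satisfies
`|S| + c(G - S) ≤ 1 + |S| * d`, where `c` counts connected components
(`ncard_add_card_components_le`). Hence any `S ⊆ B` with
`|S| = min(|B|, ⌊(k - 1) / d⌋)` works.

The bound holds by induction on `S`: deleting one more vertex `v` destroys the component of `v` and
creates at most `deg v` new ones, since each new component contains a neighbour of `v`
(`card_components_insert_add_one_le`).
-/

/-- A walk in `G - S` starting at `a ≠ v` either avoids `v`, or its initial part reaches a
neighbour of `v` while avoiding `v`. -/
lemma reachable_or_reaches_neighbor {V : Type*} (G : SimpleGraph V) (S : Set V) (v : V)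
    {a b : ↥Sᶜ} (p : (G.induce Sᶜ).Walk a b) (ha : (a : V) ∈ (insert v S)ᶜ) :
    (∃ hb : (b : V) ∈ (insert v S)ᶜ,
      (G.induce (insert v S)ᶜ).Reachable ⟨a, ha⟩ ⟨b, hb⟩) ∨
    (∃ w : ↥(insert v S)ᶜ, G.Adj v w ∧
      (G.induce (insert v S)ᶜ).Reachable ⟨a, ha⟩ w) := by
  induction p with
  | nil => exact Or.inl ⟨ha, SimpleGraph.Reachable.refl _⟩
  | @cons a c b h p ih =>
    have hac : G.Adj a c := h
    by_cases hc : (c : V) = v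
    · exact Or.inr ⟨⟨a, ha⟩, hc ▸ hac.symm, SimpleGraph.Reachable.refl _⟩
    · have hcT : (c : V) ∈ (insert v S)ᶜ := by
        rintro (h | h)
        · exact hc h
        · exact c.2 h
      have hstep : (G.induce (insert v S)ᶜ).Reachable ⟨a, ha⟩ ⟨c, hcT⟩ :=
        SimpleGraph.Adj.reachable (by simpa using hac)
      rcases ih hcT with ⟨hb, hr⟩ | ⟨w, hw, hr⟩
      · exact Or.inl ⟨hb, hstep.trans hr⟩
      · exact Or.inr ⟨w, hw, hstep.trans hr⟩

/-- Deleting `v` from `G - S` removes one component and creates at most `deg v` new ones. The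
injection sends a component not attached to `v` to itself, any other component to a neighbour of
`v` it contains, and the extra point to the old component of `v`. -/
lemma card_components_insert_add_one_le {V : Type*} [Finite V] (G : SimpleGraph V) (S : Set V)
    (v : V) (hv : v ∉ S) :
    Nat.card (G.induce (insert v S)ᶜ).ConnectedComponent + 1 ≤
      Nat.card (G.induce Sᶜ).ConnectedComponent + (G.neighborSet v).ncard := by
  classical
  have hsub : (insert v S)ᶜ ⊆ Sᶜ := Set.compl_subset_compl.mpr (Set.subset_insert v S)
  let φ : G.induce (insert v S)ᶜ →g G.induce Sᶜ := (G.induceHomOfLE hsub).toHom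
  let f := SimpleGraph.ConnectedComponent.map φ
  let y : (G.induce Sᶜ).ConnectedComponent :=
    (G.induce Sᶜ).connectedComponentMk ⟨v, hv⟩
  have hmk : ∀ a : ↥(insert v S)ᶜ, f ((G.induce (insert v S)ᶜ).connectedComponentMk a) =
      (G.induce Sᶜ).connectedComponentMk ⟨a, hsub a.2⟩ := fun a => rfl
  have hnb : ∀ x, f x = y → ∃ w : ↥(insert v S)ᶜ, G.Adj v w ∧
      (G.induce (insert v S)ᶜ).connectedComponentMk w = x := by
    intro x
    induction x using SimpleGraph.ConnectedComponent.ind with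
    | _ a =>
      intro h
      rw [hmk] at h
      obtain ⟨p⟩ := SimpleGraph.ConnectedComponent.exact h
      rcases reachable_or_reaches_neighbor G S v p a.2 with ⟨hb, _⟩ | ⟨w, hw, hr⟩
      · exact absurd (Set.mem_insert v S) hb
      · exact ⟨w, hw, SimpleGraph.ConnectedComponent.sound hr.symm⟩
  have hinj : ∀ x x', f x = f x' → f x ≠ y → x = x' := by
    intro x x'
    induction x using SimpleGraph.ConnectedComponent.ind with
    | _ a =>
    induction x' using SimpleGraph.ConnectedComponent.ind with
    | _ b =>
      intro h hne
      rw [hmk, hmk] at h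
      obtain ⟨p⟩ := SimpleGraph.ConnectedComponent.exact h
      rcases reachable_or_reaches_neighbor G S v p a.2 with ⟨hb, hr⟩ | ⟨w, hw, hr⟩
      · exact SimpleGraph.ConnectedComponent.sound hr
      · refine absurd ?_ hne
        have hwv : (G.induce Sᶜ).Adj (φ w) ⟨v, hv⟩ := hw.symm
        exact SimpleGraph.ConnectedComponent.sound ((hr.map φ).trans hwv.reachable)
  choose! g hg hgx using hnb
  let F : (G.induce (insert v S)ᶜ).ConnectedComponent ⊕ Unit →
      (G.induce Sᶜ).ConnectedComponent ⊕ G.neighborSet v := fun z => match z with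
    | Sum.inl x => if h : f x = y then Sum.inr ⟨g x h, hg x h⟩ else Sum.inl (f x)
    | Sum.inr _ => Sum.inl y
  have hF : Function.Injective F := by
    rintro (x | _) (x' | _) h
    · by_cases h1 : f x = y <;> by_cases h2 : f x' = y
      · simp only [F, h1, h2, dite_true, Sum.inr.injEq] at h
        have hgg : g x h1 = g x' h2 := Subtype.ext (Subtype.mk.inj h)
        rw [← hgx x h1, ← hgx x' h2, hgg]
      · simp [F, h1, h2] at h
      · simp [F, h1, h2] at h
      · simp only [F, h1, h2, dite_false, Sum.inl.injEq] at h
        rw [hinj x x' h h1]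
    · by_cases h1 : f x = y <;> simp [F, h1] at h
    · by_cases h1 : f x' = y
      · simp [F, h1] at h
      · simp only [F, h1, dite_false, Sum.inl.injEq] at h
        exact absurd h.symm h1
    · rfl
  have := Nat.card_le_card_of_injective F hF
  rwa [Nat.card_sum, Nat.card_sum, Nat.card_unique (α := Unit), Nat.card_coe_set_eq] at this

lemma ncard_add_card_components_le {V : Type*} [Finite V] (G : SimpleGraph V)
    (hG : G.Connected) (d : ℕ) (S : Set V) (hS : ∀ v ∈ S, (G.neighborSet v).ncard ≤ d) :
    S.ncard + Nat.card (G.induce Sᶜ).ConnectedComponent ≤ 1 + S.ncard * d := by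
  induction S, S.toFinite using Set.Finite.induction_on with
  | empty =>
    have hpre : (G.induce (∅ : Set V)ᶜ).Preconnected := by
      rw [Set.compl_empty]
      exact (SimpleGraph.induceUnivIso G).symm.connected_iff.mp hG |>.preconnected
    have := hpre.subsingleton_connectedComponent
    have := Finite.card_le_one_iff_subsingleton.mpr this
    simpa using this
  | @insert v S hv hfin ih =>
    have h1 := ih fun w hw => hS w (Set.mem_insert_of_mem v hw)
    have h2 := card_components_insert_add_one_le G S v hv
    have h3 := hS v (Set.mem_insert v S)
    rw [Set.ncard_insert_of_notMem hv hfin, Nat.add_mul]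
    omega

/-- greedy core of Lemmas 4.2 and 4.6: in a finite connected graph
`G`, if every vertex of `B` has degree at most `d` in `G` and `k > 0`, then there is a
subset `B* ⊆ B` with `|B*|` plus the number of connected components of the subgraph of
`G` induced on the complement of `B*` at most `k`, and `|B*| ≥ min(|B|, ⌊(k−1)/d⌋)`. -/
theorem stmt12 {V : Type*} [Fintype V] (G : SimpleGraph V) (hG : G.Connected)
    (d : ℕ) (hd : 1 ≤ d)
    (B : Set V) (hB : ∀ v ∈ B, (G.neighborSet v).ncard ≤ d)
    (k : ℕ) (hk : 0 < k) :
    ∃ Bstar : Set V, Bstar ⊆ B ∧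
      Bstar.ncard + Nat.card (G.induce Bstarᶜ).ConnectedComponent ≤ k ∧
      min B.ncard ((k - 1) / d) ≤ Bstar.ncard := by
  obtain ⟨S, hSB, hS⟩ := Set.exists_subset_card_eq (min_le_left B.ncard ((k - 1) / d))
  refine ⟨S, hSB, ?_, hS.ge⟩
  have h1 := ncard_add_card_components_le G hG d S fun v hv => hB v (hSB hv)
  have h2 : S.ncard * d ≤ k - 1 :=
    (Nat.mul_le_mul_right d (hS.trans_le (min_le_right _ _))).trans (Nat.div_mul_le_self _ _)
  omega
end
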